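/- arXiv:0711.0013 — 2 statements merged into one kernel-verified Lean document; each statement's English description precedes it below -/
import Mathlib

section
/- A family of logarithmic Sobolev inequalities on the hyperbolic plane (Theorem 4.1, inequality (3.9)): Let k > 1 be a real number. Let f : D → [0,∞) be bounded with lim_{|ζ|→1} f(ζ) = 0, weakly differentiable with ∫_D |∇f|² dA < ∞, normalized so that ∫_D f² dμ = 1, and with ∫_D f² |ln f| dμ < ∞. Then ∫_D f(ζ)² ln(f(ζ)²) dμ(ζ) ≤ 2k·ln((k−1)/k) + ln((k−1)/(2π)) + ((2k+1)/(k(k−1))) · ∫_D |∇f|² dA. -/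
open MeasureTheory Metric

/-- The hyperbolic area measure `μ` on the unit disc `D ⊆ ℂ`, with density
`4(1−|ζ|²)^{−2}` with respect to Lebesgue measure (Poincaré metric). -/
noncomputable def muDisc : Measure ℂ :=
  (volume.restrict (ball (0 : ℂ) 1)).withDensity
    (fun ζ => ENNReal.ofReal (4 * ((1 - ‖ζ‖ ^ 2) ^ 2)⁻¹))

/-!
In the coordinates `(s, θ) ∈ ℝ × (-π/2, π/2)` obtained from the disc by the Cayley transform and
the complex logarithm, hyperbolic area is `ds dθ / cos² θ` and the Dirichlet integral is Euclidean.
By the chain rule for entropy, the entropy of the density `f² / cos²` is the sum of those of its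
fibres in `s` and of its marginal in `θ`. Each satisfies a one-dimensional logarithmic Sobolev
inequality, proved by transport to a Gaussian of variance `b` and the duality
`∫ m V' ≤ ∫ ((√m)')² + ∫ m V²`. In `s` the test field `V` is the transport `S`; in `θ` it is
`(S + b sin θ) / cos θ`, damped where `S sin θ` is large. The damping needs `S` and `sin θ` to have
the same sign, which holds if `0` is a median of the marginal; a rotation of the disc makes it one.
Soft thresholding reduces to compactly supported `f`, and `b = (2k + 1) / (2k(k - 1))`.
-/

namespace HyperbolicLogSobolev

open Set Filter Topology ProbabilityTheory
open scoped NNReal Real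

section GaussianTransport

lemma hasStrictDerivAt_integral_Iic {E : Type*} [NormedAddCommGroup E] [NormedSpace ℝ E]
    [CompleteSpace E] {p : ℝ → E} (hp : Continuous p) (hint : Integrable p) (x : ℝ) :
    HasStrictDerivAt (fun y => ∫ t in Iic y, p t) (p x) x := by
  have h := intervalIntegral.integral_hasStrictDerivAt_right (hp.intervalIntegrable 0 x)
    (hp.stronglyMeasurableAtFilter volume (𝓝 x)) hp.continuousAt
  refine (h.const_add (∫ t in Iic 0, p t)).congr_of_eventuallyEq (Eventually.of_forall fun y => ?_)
  change _ + ∫ t in 0..y, p t = ∫ t in Iic y, p t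
  rw [← intervalIntegral.integral_Iic_sub_Iic hint.integrableOn hint.integrableOn, add_sub_cancel]

lemma continuous_gaussianPDFReal (μ : ℝ) (v : ℝ≥0) : Continuous (gaussianPDFReal μ v) := by
  unfold gaussianPDFReal
  fun_prop

variable {v : ℝ≥0}

lemma log_gaussianPDFReal (hv : v ≠ 0) (μ x : ℝ) :
    Real.log (gaussianPDFReal μ v x) = -(Real.log (2 * π * v) / 2) - (x - μ) ^ 2 / (2 * v) := by
  rw [gaussianPDFReal, Real.log_mul (by positivity) (by positivity), Real.log_inv, Real.log_exp,
    Real.log_sqrt (by positivity)]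
  ring

lemma hasStrictDerivAt_cdf_gaussianReal (hv : v ≠ 0) (μ x : ℝ) :
    HasStrictDerivAt (cdf (gaussianReal μ v)) (gaussianPDFReal μ v x) x := by
  have h := hasStrictDerivAt_integral_Iic (continuous_gaussianPDFReal μ v)
    (integrable_gaussianPDFReal μ v) x
  refine h.congr_of_eventuallyEq (Eventually.of_forall fun y => ?_)
  rw [cdf_eq_real, Measure.real, gaussianReal_apply_eq_integral μ hv, ENNReal.toReal_ofReal]
  exact integral_nonneg fun t => gaussianPDFReal_nonneg μ v t

lemma strictMono_cdf_gaussianReal (hv : v ≠ 0) (μ : ℝ) : StrictMono (cdf (gaussianReal μ v)) :=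
  strictMono_of_hasDerivAt_pos (fun x => (hasStrictDerivAt_cdf_gaussianReal hv μ x).hasDerivAt)
    fun x => gaussianPDFReal_pos μ v x hv

lemma cdf_gaussianReal_zero (hv : v ≠ 0) : cdf (gaussianReal 0 v) 0 = 1 / 2 := by
  have := nullSingletonClass_gaussianReal (μ := 0) hv
  have hsymm : (gaussianReal 0 v).real (Iic 0) = (gaussianReal 0 v).real (Ioi 0) := by
    have hmap := gaussianReal_map_neg (μ := 0) (v := v)
    rw [neg_zero] at hmap
    rw [measureReal_congr Iio_ae_eq_Iic.symm]
    nth_rw 1 [← hmap]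
    rw [map_measureReal_apply measurable_neg measurableSet_Iio]
    simp
  have hsum := measureReal_add_measureReal_compl (μ := gaussianReal 0 v) (s := Iic 0)
    measurableSet_Iic
  rw [compl_Iic, ← hsymm, probReal_univ] at hsum
  rw [cdf_eq_real]
  linarith

/-- The quantile function of the centred Gaussian of variance `v`, the inverse of its distribution
function; its values outside `(0, 1)` are junk. -/
noncomputable def gaussianQuantile (v : ℝ≥0) : ℝ → ℝ :=
  Function.invFun (cdf (gaussianReal 0 v))

lemma cdf_gaussianQuantile (hv : v ≠ 0) {u : ℝ} (hu : u ∈ Ioo (0 : ℝ) 1) :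
    cdf (gaussianReal 0 v) (gaussianQuantile v u) = u := by
  have hcont : Continuous (cdf (gaussianReal 0 v)) := continuous_iff_continuousAt.2 fun x =>
    (hasStrictDerivAt_cdf_gaussianReal hv 0 x).hasDerivAt.continuousAt
  exact Function.invFun_eq <| mem_range_of_exists_le_of_exists_ge hcont
    ((tendsto_cdf_atBot _).eventually_le_const hu.1).exists
    ((tendsto_cdf_atTop _).eventually_const_le hu.2).exists

lemma hasDerivAt_gaussianQuantile (hv : v ≠ 0) {u : ℝ} (hu : u ∈ Ioo (0 : ℝ) 1) :
    HasDerivAt (gaussianQuantile v) (gaussianPDFReal 0 v (gaussianQuantile v u))⁻¹ u := by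
  have h := (hasStrictDerivAt_cdf_gaussianReal hv 0 (gaussianQuantile v u)).to_local_left_inverse
    (gaussianPDFReal_pos 0 v _ hv).ne' (Eventually.of_forall
      (Function.leftInverse_invFun (strictMono_cdf_gaussianReal hv 0).injective))
  rw [cdf_gaussianQuantile hv hu] at h
  exact h.hasDerivAt

lemma monotoneOn_gaussianQuantile (hv : v ≠ 0) : MonotoneOn (gaussianQuantile v) (Ioo 0 1) :=
  fun s hs t ht hst => (strictMono_cdf_gaussianReal hv 0).le_iff_le.1 <| by
    rwa [cdf_gaussianQuantile hv hs, cdf_gaussianQuantile hv ht]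

lemma gaussianQuantile_half (hv : v ≠ 0) : gaussianQuantile v (1 / 2) = 0 :=
  (strictMono_cdf_gaussianReal hv 0).injective <| by
    rw [cdf_gaussianQuantile hv (by norm_num), cdf_gaussianReal_zero hv]

/-- `S` pushes `exp (-η) • p / ∫ p`, completed by a mass escaping to `±∞` in equal shares, forward
to the centred Gaussian of variance `v`; `S'` is its derivative. The loss of mass `η > 0` keeps `S`
finite and smooth where `p` vanishes. The last field says that `S` changes sign at the medians of
`p`. -/
structure IsGaussianTransport (v : ℝ≥0) (η : ℝ) (p S S' : ℝ → ℝ) : Prop where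
  hasDerivAt (x : ℝ) : HasDerivAt S (S' x) x
  continuous_deriv : Continuous S'
  mul_deriv (x : ℝ) :
    (∫ t, p t) * gaussianPDFReal 0 v (S x) * S' x = Real.exp (-η) * p x
  mul_sub_nonneg (x₀ : ℝ) (hx₀ : ∫ t in Iic x₀, p t = (∫ t, p t) / 2) (x : ℝ) :
    0 ≤ S x * (x - x₀)

variable {η : ℝ} {p : ℝ → ℝ}

lemma IsGaussianTransport.deriv_pos {S S' : ℝ → ℝ} (h : IsGaussianTransport v η p S S')
    (hv : v ≠ 0) (hM : 0 < ∫ t, p t) {x : ℝ} (hx : 0 < p x) : 0 < S' x := by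
  have hpdf := gaussianPDFReal_pos 0 v (S x) hv
  exact (mul_pos_iff_of_pos_left (mul_pos hM hpdf)).1 (h.mul_deriv x ▸ by positivity)

lemma IsGaussianTransport.log_eq {S S' : ℝ → ℝ} (h : IsGaussianTransport v η p S S')
    (hv : v ≠ 0) (hM : 0 < ∫ t, p t) {x : ℝ} (hx : 0 < p x) :
    Real.log (p x) = Real.log (∫ t, p t) + η - Real.log (2 * π * v) / 2 - S x ^ 2 / (2 * v)
      + Real.log (S' x) := by
  have hpdf := gaussianPDFReal_pos 0 v (S x) hv
  have hlog := congrArg Real.log (h.mul_deriv x)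
  rw [Real.log_mul (mul_pos hM hpdf).ne' (h.deriv_pos hv hM hx).ne', Real.log_mul hM.ne' hpdf.ne',
    Real.log_mul (Real.exp_ne_zero _) hx.ne', Real.log_exp, log_gaussianPDFReal hv, sub_zero]
    at hlog
  linarith

theorem exists_isGaussianTransport (hv : v ≠ 0) (hη : 0 < η) (hp : Continuous p)
    (hp0 : ∀ x, 0 ≤ p x) (hint : Integrable p) (hM : 0 < ∫ t, p t) :
    ∃ S S' : ℝ → ℝ, IsGaussianTransport v η p S S' := by
  set M := ∫ t, p t
  set e := Real.exp (-η)
  have he0 : 0 < e := Real.exp_pos _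
  have he1 : e < 1 := by simpa [e] using hη
  let N : ℝ → ℝ := fun x => (1 - e) / 2 + e * ((∫ t in Iic x, p t) / M)
  have hN (x : ℝ) : N x ∈ Ioo (0 : ℝ) 1 := by
    have h0 : 0 ≤ (∫ t in Iic x, p t) / M :=
      div_nonneg (setIntegral_nonneg measurableSet_Iic fun t _ => hp0 t) hM.le
    have h1 : (∫ t in Iic x, p t) / M ≤ 1 :=
      (div_le_one hM).2 (setIntegral_le_integral hint (Eventually.of_forall hp0))
    exact ⟨by simp only [N]; nlinarith, by simp only [N]; nlinarith⟩
  have hN' (x : ℝ) : HasDerivAt N (e * (p x / M)) x :=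
    (((hasStrictDerivAt_integral_Iic hp hint x).hasDerivAt.div_const M).const_mul e).const_add _
  have hNmono : Monotone N := monotone_of_hasDerivAt_nonneg hN' fun x =>
    mul_nonneg he0.le (div_nonneg (hp0 x) hM.le)
  have hS (x : ℝ) : HasDerivAt (fun y => gaussianQuantile v (N y))
      ((gaussianPDFReal 0 v (gaussianQuantile v (N x)))⁻¹ * (e * (p x / M))) x :=
    (hasDerivAt_gaussianQuantile hv (hN x)).comp x (hN' x)
  have hScont : Continuous fun y => gaussianQuantile v (N y) :=
    continuous_iff_continuousAt.2 fun x => (hS x).continuousAt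
  refine ⟨_, _, hS, ?_, fun x => ?_, fun x₀ hx₀ x => ?_⟩
  · exact (((continuous_gaussianPDFReal 0 v).comp hScont).inv₀
      fun x => (gaussianPDFReal_pos 0 v _ hv).ne').mul (continuous_const.mul (hp.div_const M))
  · have hpdf := (gaussianPDFReal_pos 0 v (gaussianQuantile v (N x)) hv).ne'
    change M * _ * _ = e * p x
    field_simp
  · have hSx₀ : gaussianQuantile v (N x₀) = 0 := by
      rw [← gaussianQuantile_half hv]
      congr 1
      simp only [N, hx₀]
      field_simp
      ring
    have hSmono : Monotone fun y => gaussianQuantile v (N y) := fun y z hyz =>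
      monotoneOn_gaussianQuantile hv (hN y) (hN z) (hNmono hyz)
    rcases le_total x x₀ with hx | hx
    · exact mul_nonneg_of_nonpos_of_nonpos ((hSmono hx).trans_eq hSx₀) (sub_nonpos.2 hx)
    · exact mul_nonneg (hSx₀.symm.trans_le (hSmono hx)) (sub_nonneg.2 hx)

end GaussianTransport

section CompactSupport

lemma continuous_mul_of_tsupport_subset {X R : Type*} [TopologicalSpace X] [TopologicalSpace R]
    [MulZeroClass R] [ContinuousMul R] {U : Set X} {g W : X → R} (hg : Continuous g)
    (hU : IsOpen U) (hgU : tsupport g ⊆ U) (hW : ContinuousOn W U) :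
    Continuous fun x => g x * W x :=
  (hg.continuousOn.mul hW).continuous_of_tsupport_subset hU (tsupport_mul_subset_left.trans hgU)

lemma integrable_mul_of_tsupport_subset {X : Type*} [TopologicalSpace X] [MeasurableSpace X]
    [OpensMeasurableSpace X] {μ : Measure X} [IsFiniteMeasureOnCompacts μ] {U : Set X}
    {g W : X → ℝ} (hg : Continuous g) (hgc : HasCompactSupport g) (hU : IsOpen U)
    (hgU : tsupport g ⊆ U) (hW : ContinuousOn W U) : Integrable (fun x => g x * W x) μ :=
  (continuous_mul_of_tsupport_subset hg hU hgU hW).integrable_of_hasCompactSupport hgc.mul_right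

lemma tsupport_sq {X : Type*} [TopologicalSpace X] (g : X → ℝ) :
    tsupport (fun x => g x ^ 2) = tsupport g := by
  have : Function.support (fun x => g x ^ 2) = Function.support g := by ext; simp
  simp only [tsupport, this]

lemma hasCompactSupport_sq {X : Type*} [TopologicalSpace X] {g : X → ℝ}
    (hg : HasCompactSupport g) : HasCompactSupport fun x => g x ^ 2 := by
  rwa [HasCompactSupport, tsupport_sq]

lemma hasDerivAt_mul_of_tsupport_subset {U : Set ℝ} {g g' V V' : ℝ → ℝ}
    (hg : ∀ x, HasDerivAt g (g' x) x) (hgU : tsupport g ⊆ U)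
    (hV : ∀ x ∈ U, HasDerivAt V (V' x) x) (x : ℝ) :
    HasDerivAt (fun y => g y * V y) (g' x * V x + g x * V' x) x := by
  by_cases hx : x ∈ tsupport g
  · exact (hg x).mul (hV x (hgU hx))
  · have hzero := notMem_tsupport_iff_eventuallyEq.1 hx
    have hg'x : g' x = 0 := (hg x).unique ((hasDerivAt_const x 0).congr_of_eventuallyEq hzero)
    have hprod : (fun y => g y * V y) =ᶠ[𝓝 x] fun _ => 0 := by
      filter_upwards [hzero] with y hy
      simp [hy]
    simpa [hg'x, hzero.eq_of_nhds] using (hasDerivAt_const x (0 : ℝ)).congr_of_eventuallyEq hprod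

/-- The marginal of a density on `ℝ × ℝ` in the second variable. -/
noncomputable def marginal (G : ℝ × ℝ → ℝ) (θ : ℝ) : ℝ :=
  ∫ s, G (s, θ)

variable {G : ℝ × ℝ → ℝ}

lemma tsupport_marginal_subset (hGc : HasCompactSupport G) :
    tsupport (marginal G) ⊆ Prod.snd '' tsupport G := by
  refine closure_minimal (fun θ hθ => ?_) (hGc.isCompact.image continuous_snd).isClosed
  by_contra hθ'
  refine hθ (integral_eq_zero_of_ae (Eventually.of_forall fun s => ?_))
  exact image_eq_zero_of_notMem_tsupport fun hs => hθ' ⟨_, hs, rfl⟩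

lemma hasCompactSupport_marginal (hGc : HasCompactSupport G) : HasCompactSupport (marginal G) :=
  (hGc.isCompact.image continuous_snd).of_isClosed_subset (isClosed_tsupport _)
    (tsupport_marginal_subset hGc)

lemma continuous_marginal (hG : Continuous G) (hGc : HasCompactSupport G) :
    Continuous (marginal G) := by
  refine continuousOn_univ.1 (continuousOn_integral_of_compact_support
    (hGc.isCompact.image continuous_fst) (hG.comp continuous_swap).continuousOn
    fun θ s _ hs => ?_)
  exact image_eq_zero_of_notMem_tsupport fun hs' => hs ⟨_, hs', rfl⟩

lemma integral_marginal_mul {W : ℝ → ℝ} (hGW : Integrable fun z => G z * W z.2) :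
    ∫ θ, marginal G θ * W θ = ∫ z, G z * W z.2 := by
  rw [Measure.volume_eq_prod, integral_prod_symm _ hGW]
  simp only [marginal, integral_mul_const]

end CompactSupport

section WeakDirichletBound

/-- The dual form `∫ m V' ≤ J + ∫ m V²` of the bound `∫ ((√m)')² ≤ J`, for a density `m` supported
in `U`. Unlike the root `√m`, it makes sense for marginals of smooth densities, whose roots may
fail to be differentiable at their zeros. -/
def WeakDirichletBound (U : Set ℝ) (m : ℝ → ℝ) (J : ℝ) : Prop :=
  ∀ V V' : ℝ → ℝ, (∀ x ∈ U, HasDerivAt V (V' x) x) → ContinuousOn V' U →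
    ∫ x, m x * V' x ≤ J + ∫ x, m x * V x ^ 2

variable {U : Set ℝ} {m : ℝ → ℝ} {J : ℝ}

lemma WeakDirichletBound.nonneg (h : WeakDirichletBound U m J) : 0 ≤ J := by
  simpa using h 0 0 (fun x _ => hasDerivAt_const x 0) continuousOn_const

lemma WeakDirichletBound.integral_le (h : WeakDirichletBound U m J) (hU : IsOpen U)
    (hm : Continuous m) (hmc : HasCompactSupport m) (hmU : tsupport m ⊆ U) {b : ℝ} (hb : 0 < b)
    {V V' ψ : ℝ → ℝ} (hV : ∀ x ∈ U, HasDerivAt V (V' x) x) (hV' : ContinuousOn V' U)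
    (hψ : Integrable ψ) (hψV : ∀ x, ψ x ≤ m x * V' x - m x * V x ^ 2 / (2 * b)) :
    ∫ x, ψ x ≤ 2 * b * J := by
  have hint₁ : Integrable fun x => m x * V' x :=
    integrable_mul_of_tsupport_subset hm hmc hU hmU hV'
  have hint₂ : Integrable fun x => m x * V x ^ 2 := integrable_mul_of_tsupport_subset hm hmc hU hmU
    (ContinuousOn.pow (fun x hx => (hV x hx).continuousAt.continuousWithinAt) 2)
  have hscaled := h (fun x => V x / (2 * b)) (fun x => V' x / (2 * b))
    (fun x hx => (hV x hx).div_const _) (hV'.div_const _)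
  simp only [div_pow, ← mul_div_assoc, integral_div] at hscaled
  calc ∫ x, ψ x ≤ ∫ x, (m x * V' x - m x * V x ^ 2 / (2 * b)) :=
        integral_mono hψ (hint₁.sub (hint₂.div_const _)) hψV
    _ = 2 * b * ((∫ x, m x * V' x) / (2 * b) - (∫ x, m x * V x ^ 2) / (2 * b) ^ 2) := by
        rw [integral_sub hint₁ (hint₂.div_const _), integral_div]
        field_simp
    _ ≤ 2 * b * J := mul_le_mul_of_nonneg_left (by linarith) (by positivity)

theorem weakDirichletBound_sq (hU : IsOpen U) {h : ℝ → ℝ} (hh : Differentiable ℝ h)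
    (hhc : HasCompactSupport h) (hhU : tsupport h ⊆ U)
    (hh' : Integrable fun x => deriv h x ^ 2) :
    WeakDirichletBound U (fun x => h x ^ 2) (∫ x, deriv h x ^ 2) := by
  intro V V' hV hV'
  have hsqU : tsupport (fun x => h x ^ 2) ⊆ U := tsupport_sq h ▸ hhU
  have hsqc : HasCompactSupport fun x => h x ^ 2 := hasCompactSupport_sq hhc
  have hVcont : ContinuousOn V U := fun x hx => (hV x hx).continuousAt.continuousWithinAt
  have hV2 : Integrable fun x => h x ^ 2 * V x ^ 2 :=
    integrable_mul_of_tsupport_subset (hh.continuous.pow 2) hsqc hU hsqU (hVcont.pow 2)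
  have hhV : Integrable fun x => h x ^ 2 * V' x :=
    integrable_mul_of_tsupport_subset (hh.continuous.pow 2) hsqc hU hsqU hV'
  have hcross : Integrable fun x => 2 * h x * deriv h x * V x := by
    refine (hh'.add hV2).mono' ?_ (Eventually.of_forall fun x => ?_)
    · have hmeas := ((continuous_mul_of_tsupport_subset hh.continuous hU hhU
        hVcont).measurable.mul (measurable_deriv h)).const_mul 2
      refine hmeas.aestronglyMeasurable.congr (Eventually.of_forall fun x => ?_)
      change 2 * (h x * V x * deriv h x) = _
      ring
    · rw [Real.norm_eq_abs, abs_le]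
      constructor <;> simp only [Pi.add_apply] <;>
        nlinarith [sq_nonneg (deriv h x + h x * V x), sq_nonneg (deriv h x - h x * V x)]
  have hibp : ∫ x, (2 * h x * deriv h x * V x + h x ^ 2 * V' x) = 0 := by
    refine integral_eq_zero_of_hasDerivAt_of_integrable
      (hasDerivAt_mul_of_tsupport_subset (fun x => ?_) hsqU hV) (hcross.add hhV)
      (integrable_mul_of_tsupport_subset (hh.continuous.pow 2) hsqc hU hsqU hVcont)
    simpa using (hh x).hasDerivAt.fun_pow 2
  rw [integral_add hcross hhV] at hibp
  have hyoung : -∫ x, 2 * h x * deriv h x * V x ≤ ∫ x, (deriv h x ^ 2 + h x ^ 2 * V x ^ 2) := by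
    rw [← integral_neg]
    refine integral_mono hcross.neg (hh'.add hV2) fun x => ?_
    simp only
    nlinarith [sq_nonneg (deriv h x + h x * V x)]
  rw [integral_add hh' hV2] at hyoung
  linarith

theorem weakDirichletBound_marginal_sq (hU : IsOpen U) {F : ℝ × ℝ → ℝ} (hF : Differentiable ℝ F)
    (hFc : HasCompactSupport F) (hFU : tsupport F ⊆ Prod.snd ⁻¹' U)
    (hF' : Integrable fun z => fderiv ℝ F z (0, 1) ^ 2) :
    WeakDirichletBound U (marginal fun z => F z ^ 2) (∫ z, fderiv ℝ F z (0, 1) ^ 2) := by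
  intro V V' hV hV'
  have hsqc : HasCompactSupport fun z => F z ^ 2 := hasCompactSupport_sq hFc
  have hint {W : ℝ → ℝ} (hW : ContinuousOn W U) : Integrable fun z : ℝ × ℝ => F z ^ 2 * W z.2 :=
    integrable_mul_of_tsupport_subset (hF.continuous.pow 2) hsqc
      (hU.preimage continuous_snd) (tsupport_sq F ▸ hFU)
      (hW.comp continuousOn_snd fun z hz => hz)
  have hV2 := hint (W := fun θ => V θ ^ 2)
    (ContinuousOn.pow (fun x hx => (hV x hx).continuousAt.continuousWithinAt) 2)
  have hsum := hF'.add hV2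
  simp only [Pi.add_def] at hsum
  rw [integral_marginal_mul (hint hV'), integral_marginal_mul hV2, ← integral_add hF' hV2,
    Measure.volume_eq_prod, integral_prod _ (hint hV'), integral_prod _ hsum]
  refine integral_mono_ae (hint hV').integral_prod_left hsum.integral_prod_left ?_
  filter_upwards [hF'.prod_right_ae, hV2.prod_right_ae] with s hs' hs2
  have hderiv (θ : ℝ) : HasDerivAt (fun t => F (s, t)) (fderiv ℝ F (s, θ) (0, 1)) θ :=
    (hF (s, θ)).hasFDerivAt.comp_hasDerivAt θ ((hasDerivAt_const θ s).prodMk (hasDerivAt_id θ))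
  have hfibre := weakDirichletBound_sq hU (h := fun t => F (s, t))
    (fun θ => (hderiv θ).differentiableAt)
    (hFc.comp_isClosedEmbedding (Function.LeftInverse.isClosedEmbedding (f := Prod.snd)
      (fun _ => rfl) continuous_snd (by fun_prop)))
    ((tsupport_comp_subset_preimage F (by fun_prop)).trans fun θ hθ => hFU hθ)
    (by simpa only [(hderiv _).deriv] using hs') V V' hV hV'
  simp only [(hderiv _).deriv] at hfibre
  simpa only [integral_add hs' hs2] using hfibre

end WeakDirichletBound

section OneDimensional

lemma eq_zero_of_integral_eq_zero {X : Type*} [TopologicalSpace X] [MeasurableSpace X]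
    {μ : Measure X} [μ.IsOpenPosMeasure] {p : X → ℝ} (hp : Continuous p) (hint : Integrable p μ)
    (hp0 : ∀ x, 0 ≤ p x) (h : ∫ x, p x ∂μ = 0) : p = 0 :=
  Continuous.ae_eq_iff_eq μ hp continuous_zero |>.1 <|
    (integral_eq_zero_iff_of_nonneg hp0 hint).1 h

lemma integrable_mul_log {X : Type*} [TopologicalSpace X] [MeasurableSpace X]
    [OpensMeasurableSpace X] {μ : Measure X} [IsFiniteMeasureOnCompacts μ] {p : X → ℝ}
    (hp : Continuous p) (hpc : HasCompactSupport p) :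
    Integrable (fun x => p x * Real.log (p x)) μ :=
  (Real.continuous_mul_log.comp hp).integrable_of_hasCompactSupport hpc.mul_right

variable {J : ℝ}

/-- Testing `hJ` with a field built from the Gaussian transport reduces the integral inequality to a
pointwise one. -/
theorem integral_mul_le_of_forall_isGaussianTransport {v : ℝ≥0} (hv : v ≠ 0) {U : Set ℝ}
    (hU : IsOpen U) {p w φ : ℝ → ℝ} {C : ℝ} (hp : Continuous p) (hpc : HasCompactSupport p)
    (hpU : tsupport p ⊆ U) (hp0 : ∀ x, 0 ≤ p x) (hw : Continuous w)
    (hJ : WeakDirichletBound U (fun x => p x * w x) J) (hφ : Integrable fun x => p x * φ x)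
    (hfield : ∀ η S S', IsGaussianTransport v η p S S' → 0 < ∫ x, p x → ∃ V V' : ℝ → ℝ,
      (∀ x ∈ U, HasDerivAt V (V' x) x) ∧ ContinuousOn V' U ∧ ∀ x, 0 < p x →
        φ x + C ≤ Real.log (∫ x, p x) + η + w x * V' x - w x * V x ^ 2 / (2 * v)) :
    ∫ x, p x * φ x ≤ (∫ x, p x) * Real.log (∫ x, p x) + 2 * v * J - (∫ x, p x) * C := by
  have hv0 : (0 : ℝ) < v := by positivity
  have hint : Integrable p := hp.integrable_of_hasCompactSupport hpc
  rcases (integral_nonneg hp0 : 0 ≤ ∫ x, p x).eq_or_lt with hM | hM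
  · have := hJ.nonneg
    simp only [eq_zero_of_integral_eq_zero hp hint hp0 hM.symm, Pi.zero_apply]
    simpa using by positivity
  set M := ∫ x, p x
  refine le_of_forall_pos_le_add fun ε hε => ?_
  obtain ⟨S, S', hS⟩ := exists_isGaussianTransport hv (div_pos hε hM) hp hp0 hint hM
  obtain ⟨V, V', hV, hV', hle⟩ := hfield _ _ _ hS hM
  let K := Real.log M + ε / M - C
  have hpointwise (x : ℝ) : p x * φ x - p x * K
      ≤ p x * w x * V' x - p x * w x * V x ^ 2 / (2 * v) := by
    rcases (hp0 x).eq_or_lt with hx | hx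
    · simp [← hx]
    · simp only [K]
      linear_combination mul_le_mul_of_nonneg_left (hle x hx) hx.le
  have h := hJ.integral_le hU (hp.mul hw) hpc.mul_right (tsupport_mul_subset_left.trans hpU) hv0
    hV hV' (hφ.sub (hint.mul_const K)) hpointwise
  simp only [Pi.sub_apply] at h
  rw [integral_sub hφ (hint.mul_const K), integral_mul_const] at h
  have hMK : M * K = M * Real.log M + ε - M * C := by
    simp only [K]
    field_simp
  linarith

theorem integral_mul_log_le_of_weakDirichletBound {b : ℝ} (hb : 0 < b) {m : ℝ → ℝ}
    (hm : Continuous m) (hmc : HasCompactSupport m) (hm0 : ∀ x, 0 ≤ m x)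
    (hJ : WeakDirichletBound univ m J) :
    ∫ x, m x * Real.log (m x) ≤ (∫ x, m x) * Real.log (∫ x, m x) + 2 * b * J
      - (∫ x, m x) * (1 + Real.log (2 * π * b) / 2) := by
  lift b to ℝ≥0 using hb.le
  have hv : b ≠ 0 := by rintro rfl; simp at hb
  refine integral_mul_le_of_forall_isGaussianTransport (w := fun _ => 1) hv isOpen_univ hm hmc
    (subset_univ _) hm0 continuous_const (by simpa using hJ) (integrable_mul_log hm hmc)
    fun η S S' hS hM => ⟨S, S', fun x _ => hS.hasDerivAt x, hS.continuous_deriv.continuousOn,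
      fun x hx => ?_⟩
  rw [hS.log_eq hv hM hx, one_mul, one_mul]
  linarith [Real.log_le_sub_one_of_pos (hS.deriv_pos hv hM hx)]

end OneDimensional

section Weighted

/-- The improvement of the inequality in the angular variable over the one obtained from the
undamped field `(S + b sin) / cos`. -/
noncomputable def dampingGain (b : ℝ) : ℝ := b / (8 * (1 + b) ^ 2)

/-- The strength of the damping term in the field `tiltedField`, small enough for every term lost to
it to be absorbed. -/
noncomputable def dampingCoeff (b : ℝ) : ℝ := b / (4 * (1 + b))

variable {b : ℝ}

lemma four_fifths_mul_le_log_one_add {x : ℝ} (hx0 : 0 ≤ x) (hx1 : x ≤ 1 / 4) :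
    4 / 5 * x ≤ Real.log (1 + x) := by
  refine le_trans ?_ (Real.one_sub_inv_le_log_of_pos (by linarith))
  have : (1 + x)⁻¹ = 1 - x / (1 + x) := by field_simp; ring
  rw [this, sub_sub_cancel, le_div_iff₀ (by linarith)]
  nlinarith

lemma dampingGain_le_of_mul_one_add_eq {κ q : ℝ} (hb : 0 < b) (hκ : κ * (1 + b) = 1 / 4)
    (hq0 : 0 < q) (hq1 : q ≤ 1) :
    2 * κ ^ 2 * b ≤ κ * (1 - q) + 4 / 5 * (κ * b * q ^ 2) - κ ^ 2 * b * q ^ 2 / 2 := by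
  have hκ0 : 0 < κ := pos_of_mul_pos_left (by rw [hκ]; norm_num) (by linarith)
  have hκ1 : κ ≤ 1 / 4 := by nlinarith
  have hβ : 4 * κ * b * (1 - q + 27 / 40 * q ^ 2) ≤ 1 - q + 27 / 40 * b * q ^ 2 := by
    have : 4 * κ * b ≤ 1 := by linarith
    have : 4 * κ * b ≤ b := by nlinarith
    nlinarith [sq_nonneg q]
  have : 1 / 2 ≤ 1 - q + 27 / 40 * q ^ 2 := by nlinarith [sq_nonneg (q - 20 / 27)]
  have : 2 * κ * b ≤ 4 * κ * b * (1 - q + 27 / 40 * q ^ 2) := by nlinarith [mul_pos hκ0 hb]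
  have : κ * (κ * b * q ^ 2) ≤ 1 / 4 * (κ * b * q ^ 2) := by gcongr
  nlinarith

/-- After the linear bound on the logarithm, the right-hand side is affine in `t`, so it is enough
to compare at `t = 0` and `t = 1`. -/
lemma dampingGain_le (hb : 0 < b) {t q : ℝ} (ht0 : 0 ≤ t) (ht1 : t ≤ 1) (hq0 : 0 < q)
    (hq1 : q ≤ 1) :
    dampingGain b ≤ (1 - t) * (b / 2 - dampingCoeff b * q ^ 2) + dampingCoeff b / b * (1 - q)
      + Real.log (1 + dampingCoeff b * t * q ^ 2) - t * dampingCoeff b ^ 2 * q ^ 2 / (2 * b) := by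
  set κ := 1 / (4 * (1 + b))
  have hκ0 : 0 < κ := by positivity
  have hκ1 : κ ≤ 1 / 4 := one_div_le_one_div_of_le (by norm_num) (by linarith)
  have hκb : κ * (1 + b) = 1 / 4 := by simp only [κ]; field_simp
  have hc : dampingCoeff b = κ * b := by simp only [dampingCoeff, κ]; ring
  have hgain : dampingGain b = 2 * κ ^ 2 * b := by
    simp only [dampingGain, κ]
    field_simp
    norm_num
  have hq2 : q ^ 2 ≤ 1 := by nlinarith
  have hlog : 4 / 5 * (κ * b * t * q ^ 2) ≤ Real.log (1 + κ * b * t * q ^ 2) := by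
    refine four_fifths_mul_le_log_one_add (by positivity) ?_
    calc κ * b * t * q ^ 2 ≤ κ * b * 1 * 1 := by gcongr
      _ ≤ 1 / 4 := by linarith
  have hat_zero : 2 * κ ^ 2 * b ≤ b / 2 - κ * b * q ^ 2 + κ * (1 - q) := by
    have : κ * b * q ^ 2 ≤ 1 / 4 * b * 1 := by gcongr
    have : κ * κ * b ≤ 1 / 4 * (1 / 4) * b := by gcongr
    have : 0 ≤ κ * (1 - q) := mul_nonneg hκ0.le (by linarith)
    linarith
  have hat_one := dampingGain_le_of_mul_one_add_eq hb hκb hq0 hq1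
  have hquad : t * (κ * b) ^ 2 * q ^ 2 / (2 * b) = t * (κ ^ 2 * b * q ^ 2 / 2) := by field_simp
  have hdiv : κ * b / b = κ := by field_simp
  rw [hgain, hc, hquad, hdiv]
  linarith [mul_le_mul_of_nonneg_left hat_zero (sub_nonneg.2 ht1),
    mul_le_mul_of_nonneg_left hat_one ht0]

/-- The damping factor of `tiltedField`. -/
noncomputable def damping (S : ℝ → ℝ) (θ : ℝ) : ℝ := (1 + S θ * Real.sin θ)⁻¹

/-- The test field of the angular inequality: the transport `S` of the angular density, corrected to
account for the weight `cos ^ 2` and damped where `S * sin` is large, over `cos`. -/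
noncomputable def tiltedField (b : ℝ) (S : ℝ → ℝ) (θ : ℝ) : ℝ :=
  (S θ + (b - dampingCoeff b * damping S θ) * Real.sin θ) / Real.cos θ

/-- The derivative of the numerator of `tiltedField`. -/
noncomputable def tiltedNumDeriv (b : ℝ) (S S' : ℝ → ℝ) (θ : ℝ) : ℝ :=
  (1 + dampingCoeff b * Real.sin θ ^ 2 * damping S θ ^ 2) * S' θ
    + Real.cos θ * (b - dampingCoeff b * damping S θ ^ 2)

/-- The derivative of `tiltedField`. -/
noncomputable def tiltedFieldDeriv (b : ℝ) (S S' : ℝ → ℝ) (θ : ℝ) : ℝ :=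
  (tiltedNumDeriv b S S' θ + tiltedField b S θ * Real.sin θ) / Real.cos θ

variable {S S' : ℝ → ℝ} {θ : ℝ}

lemma damping_mul_one_add (hSθ : 0 ≤ S θ * Real.sin θ) :
    damping S θ * (1 + S θ * Real.sin θ) = 1 :=
  inv_mul_cancel₀ (by positivity)

lemma hasDerivAt_damping (hS : HasDerivAt S (S' θ) θ) (hSθ : 0 ≤ S θ * Real.sin θ) :
    HasDerivAt (damping S)
      (-(damping S θ ^ 2 * (S' θ * Real.sin θ + S θ * Real.cos θ))) θ := by
  have hne : 1 + S θ * Real.sin θ ≠ 0 := by positivity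
  refine (((hS.mul (Real.hasDerivAt_sin θ)).const_add 1).inv hne).congr_deriv ?_
  simp only [damping, Pi.mul_apply]
  field_simp

lemma hasDerivAt_tiltedField (hS : HasDerivAt S (S' θ) θ) (hSθ : 0 ≤ S θ * Real.sin θ)
    (hcos : Real.cos θ ≠ 0) : HasDerivAt (tiltedField b S) (tiltedFieldDeriv b S S' θ) θ := by
  have hnum : HasDerivAt (fun θ => S θ + (b - dampingCoeff b * damping S θ) * Real.sin θ)
      (tiltedNumDeriv b S S' θ) θ := by
    refine (hS.add ((((hasDerivAt_damping hS hSθ).const_mul _).const_sub b).mul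
      (Real.hasDerivAt_sin θ))).congr_deriv ?_
    simp only [tiltedNumDeriv]
    linear_combination (dampingCoeff b * damping S θ * Real.cos θ) * damping_mul_one_add hSθ
  refine (hnum.div (Real.hasDerivAt_cos θ) hcos).congr_deriv ?_
  simp only [tiltedFieldDeriv, tiltedField]
  field_simp
  ring

lemma log_deriv_add_log_cos_le (hb : 0 < b) (hS' : 0 < S' θ) (hSθ : 0 ≤ S θ * Real.sin θ)
    (hcos : 0 < Real.cos θ) :
    Real.log (S' θ) + Real.log (Real.cos θ) - S θ ^ 2 / (2 * b) + (1 + b / 2 + dampingGain b)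
      ≤ Real.cos θ ^ 2 * tiltedFieldDeriv b S S' θ
        - Real.cos θ ^ 2 * tiltedField b S θ ^ 2 / (2 * b) := by
  have hq : damping S θ * (1 + S θ * Real.sin θ) = 1 := damping_mul_one_add hSθ
  have hq0 : 0 < damping S θ := inv_pos.2 (by positivity)
  have hq1 : damping S θ ≤ 1 := inv_le_one_of_one_le₀ (by linarith)
  have hc : 0 ≤ dampingCoeff b := by unfold dampingCoeff; positivity
  have hcs : Real.cos θ ^ 2 = 1 - Real.sin θ ^ 2 := by linarith [Real.sin_sq_add_cos_sq θ]
  have hgain := dampingGain_le hb (sq_nonneg (Real.sin θ)) (Real.sin_sq_le_one θ) hq0 hq1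
  simp only [tiltedFieldDeriv, tiltedNumDeriv, tiltedField]
  set q := damping S θ
  set c := dampingCoeff b
  set A := S θ + (b - c * q) * Real.sin θ with hA
  have hstrain : 0 < 1 + c * Real.sin θ ^ 2 * q ^ 2 := by positivity
  have hlog := Real.log_le_sub_one_of_pos (mul_pos (mul_pos hS' hcos) hstrain)
  rw [Real.log_mul (by positivity) hstrain.ne', Real.log_mul hS'.ne' hcos.ne'] at hlog
  have hsquare : A * Real.sin θ - A ^ 2 / (2 * b) + S θ ^ 2 / (2 * b)
      = c / b * (1 - q) + Real.sin θ ^ 2 * (b / 2) - Real.sin θ ^ 2 * c ^ 2 * q ^ 2 / (2 * b) := by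
    simp only [hA]
    field_simp
    linear_combination (2 * c) * hq
  have hfield : Real.cos θ ^ 2 * (((1 + c * Real.sin θ ^ 2 * q ^ 2) * S' θ
        + Real.cos θ * (b - c * q ^ 2) + A / Real.cos θ * Real.sin θ) / Real.cos θ)
      - Real.cos θ ^ 2 * (A / Real.cos θ) ^ 2 / (2 * b)
      = S' θ * Real.cos θ * (1 + c * Real.sin θ ^ 2 * q ^ 2)
        + (1 - Real.sin θ ^ 2) * (b - c * q ^ 2) + (A * Real.sin θ - A ^ 2 / (2 * b)) := by
    rw [← hcs]
    field_simp
    ring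
  rw [hfield]
  linarith

lemma continuousOn_tiltedFieldDeriv {U : Set ℝ} (hS : ∀ x, HasDerivAt S (S' x) x)
    (hS' : Continuous S') (hSU : ∀ x ∈ U, 0 ≤ S x * Real.sin x) (hcos : ∀ x ∈ U, Real.cos x ≠ 0) :
    ContinuousOn (tiltedFieldDeriv b S S') U := by
  have hq : ContinuousOn (damping S) U := fun x hx =>
    (hasDerivAt_damping (hS x) (hSU x hx)).continuousAt.continuousWithinAt
  have hV : ContinuousOn (tiltedField b S) U := fun x hx =>
    (hasDerivAt_tiltedField (hS x) (hSU x hx) (hcos x hx)).continuousAt.continuousWithinAt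
  unfold tiltedFieldDeriv tiltedNumDeriv
  exact ContinuousOn.div (by fun_prop) (by fun_prop) hcos

lemma mul_sin_nonneg_of_mul_self_nonneg {s θ : ℝ} (hθ : θ ∈ Ioo (-(π / 2)) (π / 2))
    (hs : 0 ≤ s * θ) : 0 ≤ s * Real.sin θ := by
  have := Real.pi_pos
  rcases lt_trichotomy θ 0 with h | rfl | h
  · exact mul_nonneg_of_nonpos_of_nonpos (by nlinarith)
      (Real.sin_nonpos_of_nonpos_of_neg_pi_le h.le (by linarith [hθ.1]))
  · simp
  · exact mul_nonneg (by nlinarith) (Real.sin_nonneg_of_nonneg_of_le_pi h.le (by linarith [hθ.2]))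

lemma integrable_mul_log_add_log_cos {p : ℝ → ℝ} (hp : Continuous p) (hpc : HasCompactSupport p)
    (hpU : tsupport p ⊆ Ioo (-(π / 2)) (π / 2)) :
    Integrable fun x => p x * (Real.log (p x) + Real.log (Real.cos x)) := by
  simp only [mul_add]
  exact (integrable_mul_log hp hpc).add (integrable_mul_of_tsupport_subset hp hpc isOpen_Ioo hpU
    (Real.continuousOn_cos.log fun x hx => (Real.cos_pos_of_mem_Ioo hx).ne'))

theorem integral_mul_log_add_log_cos_le (hb : 0 < b) {J : ℝ} {p : ℝ → ℝ} (hp : Continuous p)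
    (hpc : HasCompactSupport p) (hpU : tsupport p ⊆ Ioo (-(π / 2)) (π / 2)) (hp0 : ∀ x, 0 ≤ p x)
    (hJ : WeakDirichletBound (Ioo (-(π / 2)) (π / 2)) (fun x => p x * Real.cos x ^ 2) J)
    (hmed : ∫ x in Iic 0, p x = (∫ x, p x) / 2) :
    ∫ x, p x * (Real.log (p x) + Real.log (Real.cos x))
      ≤ (∫ x, p x) * Real.log (∫ x, p x) + 2 * b * J
        - (∫ x, p x) * (1 + Real.log (2 * π * b) / 2 + b / 2 + dampingGain b) := by
  lift b to ℝ≥0 using hb.le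
  have hv : b ≠ 0 := by rintro rfl; simp at hb
  have hcos (x : ℝ) (hx : x ∈ Ioo (-(π / 2)) (π / 2)) : 0 < Real.cos x :=
    Real.cos_pos_of_mem_Ioo hx
  refine integral_mul_le_of_forall_isGaussianTransport hv isOpen_Ioo hp hpc hpU hp0 (by fun_prop)
    hJ (integrable_mul_log_add_log_cos hp hpc hpU) fun η S S' hS hM => ?_
  have hSU (x : ℝ) (hx : x ∈ Ioo (-(π / 2)) (π / 2)) : 0 ≤ S x * Real.sin x :=
    mul_sin_nonneg_of_mul_self_nonneg hx (by simpa using hS.mul_sub_nonneg 0 hmed x)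
  refine ⟨tiltedField b S, tiltedFieldDeriv b S S',
    fun x hx => hasDerivAt_tiltedField (hS.hasDerivAt x) (hSU x hx) (hcos x hx).ne',
    continuousOn_tiltedFieldDeriv hS.hasDerivAt hS.continuous_deriv hSU fun x hx => (hcos x hx).ne',
    fun x hx => ?_⟩
  have hxU : x ∈ Ioo (-(π / 2)) (π / 2) := hpU (subset_tsupport p hx.ne')
  rw [hS.log_eq hv hM hx]
  linarith [log_deriv_add_log_cos_le hb (hS.deriv_pos hv hM hx) (hSU x hxU) (hcos x hxU)]

end Weighted

section Strip

/-- The constant `C` of the inequality `∫ f² log f² ≤ 2b ∫ |∇f|² - C` on the hyperbolic plane, for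
`∫ f² = 1`. -/
noncomputable def logSobolevConst (b : ℝ) : ℝ :=
  2 + Real.log (2 * π * b) + b / 2 + dampingGain b

variable {b : ℝ} {G F : ℝ × ℝ → ℝ}

lemma setIntegral_marginal (hG : Integrable G) (A : Set ℝ) :
    ∫ θ in A, marginal G θ = ∫ z in Prod.snd ⁻¹' A, G z := by
  rw [← univ_prod, Measure.volume_eq_prod, ← Measure.prod_restrict, Measure.restrict_univ,
    integral_prod_symm]
  · rfl
  · have := hG.integrableOn (s := univ ×ˢ A)
    rwa [IntegrableOn, Measure.volume_eq_prod, ← Measure.prod_restrict, Measure.restrict_univ]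
      at this

lemma integral_marginal (hG : Integrable G) : ∫ θ, marginal G θ = ∫ z, G z := by
  simpa using setIntegral_marginal hG univ

lemma integral_sq_mul_log_div_le (hb : 0 < b) {h : ℝ → ℝ} (hh : Differentiable ℝ h)
    (hhc : HasCompactSupport h) (hh' : Integrable fun s => deriv h s ^ 2) {w : ℝ} (hw : 0 < w) :
    ∫ s, h s ^ 2 * Real.log (h s ^ 2) / w ^ 2
      ≤ (∫ s, h s ^ 2 / w ^ 2) * (Real.log (∫ s, h s ^ 2 / w ^ 2) + Real.log w)
        + 2 * b * (∫ s, deriv h s ^ 2)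
        - (∫ s, h s ^ 2 / w ^ 2) * (1 + Real.log (2 * π * b) / 2) := by
  have hsqc : HasCompactSupport fun s => h s ^ 2 := hasCompactSupport_sq hhc
  have hsq : Continuous fun s => h s ^ 2 := hh.continuous.pow 2
  have hlog := integral_mul_log_le_of_weakDirichletBound (b := b * w ^ 2) (by positivity) hsq hsqc
    (fun s => sq_nonneg _) (weakDirichletBound_sq isOpen_univ hh hhc (subset_univ _) hh')
  rcases (integral_nonneg fun s => sq_nonneg (h s) : 0 ≤ ∫ s, h s ^ 2).eq_or_lt with hm | hm
  · have hzero := eq_zero_of_integral_eq_zero hsq (hsq.integrable_of_hasCompactSupport hsqc)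
      (fun s => sq_nonneg _) hm.symm
    have hJ : 0 ≤ ∫ s, deriv h s ^ 2 := integral_nonneg fun s => sq_nonneg _
    simp only [funext_iff, Pi.zero_apply] at hzero
    simp only [hzero, zero_mul, zero_div, integral_zero]
    linarith [mul_nonneg hb.le hJ]
  · simp only [integral_div]
    rw [div_le_iff₀ (by positivity), Real.log_div hm.ne' (by positivity), Real.log_pow]
    rw [← mul_assoc (2 * π), Real.log_mul (x := 2 * π * b) (by positivity) (by positivity),
      Real.log_pow] at hlog
    refine hlog.trans_eq ?_
    push_cast
    field_simp
    ring

/-- The strip of width `π`, in real coordinates. With the metric `(ds² + dθ²) / cos² θ` it is a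
model of the hyperbolic plane. -/
def strip : Set (ℝ × ℝ) :=
  Prod.snd ⁻¹' Ioo (-(π / 2)) (π / 2)

lemma isOpen_strip : IsOpen strip :=
  isOpen_Ioo.preimage continuous_snd

lemma cos_pos_of_mem_strip {z : ℝ × ℝ} (hz : z ∈ strip) : 0 < Real.cos z.2 :=
  Real.cos_pos_of_mem_Ioo hz

lemma continuousOn_inv_cos_sq : ContinuousOn (fun z : ℝ × ℝ => (Real.cos z.2 ^ 2)⁻¹) strip :=
  (by fun_prop : Continuous fun z : ℝ × ℝ => Real.cos z.2 ^ 2).continuousOn.inv₀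
    fun _ hz => (pow_pos (cos_pos_of_mem_strip hz) 2).ne'

lemma tsupport_marginal_subset_Ioo (hGc : HasCompactSupport G) (hGU : tsupport G ⊆ strip) :
    tsupport (marginal G) ⊆ Ioo (-(π / 2)) (π / 2) :=
  (tsupport_marginal_subset hGc).trans (image_subset_iff.2 hGU)

lemma tsupport_div_cos_sq_subset : tsupport (fun z => G z / Real.cos z.2 ^ 2) ⊆ tsupport G := by
  simpa only [div_eq_mul_inv] using tsupport_mul_subset_left

lemma hasCompactSupport_div_cos_sq (hGc : HasCompactSupport G) :
    HasCompactSupport fun z => G z / Real.cos z.2 ^ 2 :=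
  hGc.mono' (subset_closure.trans tsupport_div_cos_sq_subset)

lemma continuous_div_cos_sq (hG : Continuous G) (hGU : tsupport G ⊆ strip) :
    Continuous fun z => G z / Real.cos z.2 ^ 2 := by
  simpa only [div_eq_mul_inv] using
    continuous_mul_of_tsupport_subset hG isOpen_strip hGU continuousOn_inv_cos_sq

lemma marginal_div_cos_sq_mul (hGU : tsupport G ⊆ strip) (θ : ℝ) :
    marginal (fun z => G z / Real.cos z.2 ^ 2) θ * Real.cos θ ^ 2 = marginal G θ := by
  simp only [marginal, ← integral_mul_const]
  refine integral_congr_ae (Eventually.of_forall fun s => ?_)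
  by_cases h : (s, θ) ∈ tsupport G
  · exact div_mul_cancel₀ _ (pow_pos (cos_pos_of_mem_strip (hGU h)) 2).ne'
  · simp [image_eq_zero_of_notMem_tsupport h]

lemma marginal_mul_log_le (hb : 0 < b) (hF : Differentiable ℝ F) (hFc : HasCompactSupport F)
    (hFU : tsupport F ⊆ strip) {θ : ℝ} (hFs : Integrable fun s => fderiv ℝ F (s, θ) (1, 0) ^ 2) :
    marginal (fun z => F z ^ 2 * Real.log (F z ^ 2) / Real.cos z.2 ^ 2) θ
      ≤ marginal (fun z => F z ^ 2 / Real.cos z.2 ^ 2) θ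
          * (Real.log (marginal (fun z => F z ^ 2 / Real.cos z.2 ^ 2) θ) + Real.log (Real.cos θ))
        + 2 * b * marginal (fun z => fderiv ℝ F z (1, 0) ^ 2) θ
        - marginal (fun z => F z ^ 2 / Real.cos z.2 ^ 2) θ * (1 + Real.log (2 * π * b) / 2) := by
  unfold marginal
  by_cases hθ : θ ∈ Ioo (-(π / 2)) (π / 2)
  · have hderiv (s : ℝ) : HasDerivAt (fun t => F (t, θ)) (fderiv ℝ F (s, θ) (1, 0)) s :=
      (hF (s, θ)).hasFDerivAt.comp_hasDerivAt s ((hasDerivAt_id s).prodMk (hasDerivAt_const s θ))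
    have h := integral_sq_mul_log_div_le hb (h := fun s => F (s, θ))
      (fun s => (hderiv s).differentiableAt)
      (hFc.comp_isClosedEmbedding (Function.LeftInverse.isClosedEmbedding (f := Prod.fst)
        (fun _ => rfl) continuous_fst (by fun_prop)))
      (by simpa only [(hderiv _).deriv] using hFs) (Real.cos_pos_of_mem_Ioo hθ)
    simpa only [(hderiv _).deriv] using h
  · have hzero (s : ℝ) : F (s, θ) = 0 := image_eq_zero_of_notMem_tsupport fun h => hθ (hFU h)
    have hJ : 0 ≤ ∫ s, fderiv ℝ F (s, θ) (1, 0) ^ 2 := integral_nonneg fun s => sq_nonneg _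
    simpa [hzero] using mul_nonneg (mul_pos two_pos hb).le hJ

theorem integral_mul_log_div_cos_sq_le (hb : 0 < b) (hF : Differentiable ℝ F)
    (hFc : HasCompactSupport F) (hFU : tsupport F ⊆ strip)
    (hFs : Integrable fun z => fderiv ℝ F z (1, 0) ^ 2)
    (hFθ : Integrable fun z => fderiv ℝ F z (0, 1) ^ 2)
    (hmed : ∫ z in Prod.snd ⁻¹' Iic 0, F z ^ 2 / Real.cos z.2 ^ 2
      = (∫ z, F z ^ 2 / Real.cos z.2 ^ 2) / 2) :
    ∫ z, F z ^ 2 * Real.log (F z ^ 2) / Real.cos z.2 ^ 2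
      ≤ (∫ z, F z ^ 2 / Real.cos z.2 ^ 2) * Real.log (∫ z, F z ^ 2 / Real.cos z.2 ^ 2)
        + 2 * b * ((∫ z, fderiv ℝ F z (1, 0) ^ 2) + ∫ z, fderiv ℝ F z (0, 1) ^ 2)
        - (∫ z, F z ^ 2 / Real.cos z.2 ^ 2) * logSobolevConst b := by
  have hsqc := hasCompactSupport_sq hFc
  have hsqU := (tsupport_sq F).trans_subset hFU
  set G : ℝ × ℝ → ℝ := fun z => F z ^ 2 / Real.cos z.2 ^ 2
  have hG : Continuous G := continuous_div_cos_sq (hF.continuous.fun_pow 2) hsqU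
  have hGc : HasCompactSupport G := hasCompactSupport_div_cos_sq hsqc
  have hGU : tsupport G ⊆ strip := tsupport_div_cos_sq_subset.trans hsqU
  have hGint : Integrable G := hG.integrable_of_hasCompactSupport hGc
  set p := marginal G
  have hp : Continuous p := continuous_marginal hG hGc
  have hpc : HasCompactSupport p := hasCompactSupport_marginal hGc
  have hangular := integral_mul_log_add_log_cos_le hb hp hpc
    (tsupport_marginal_subset_Ioo hGc hGU)
    (fun θ => integral_nonneg fun s => by positivity)
    (by simpa only [p, G, marginal_div_cos_sq_mul hsqU] using
      weakDirichletBound_marginal_sq isOpen_Ioo hF hFc hFU hFθ)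
    (by rw [setIntegral_marginal hGint, integral_marginal hGint, hmed])
  rw [integral_marginal hGint] at hangular
  have hL : Integrable fun z => F z ^ 2 * Real.log (F z ^ 2) / Real.cos z.2 ^ 2 :=
    (continuous_div_cos_sq (Real.continuous_mul_log.comp (hF.continuous.fun_pow 2))
      (tsupport_mul_subset_left.trans hsqU)).integrable_of_hasCompactSupport
      (hasCompactSupport_div_cos_sq hsqc.mul_right)
  have hpφ := integrable_mul_log_add_log_cos hp hpc (tsupport_marginal_subset_Ioo hGc hGU)
  have hpint : Integrable p := hp.integrable_of_hasCompactSupport hpc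
  have hFs' : Integrable (marginal fun z => fderiv ℝ F z (1, 0) ^ 2) := hFs.integral_prod_right
  have hfibres := integral_mono_ae hL.integral_prod_right
    ((hpφ.add (hFs'.const_mul (2 * b))).sub (hpint.mul_const (1 + Real.log (2 * π * b) / 2)))
    (hFs.prod_left_ae.mono fun θ hθ => marginal_mul_log_le hb hF hFc hFU hθ)
  rw [integral_sub' (hpφ.add (hFs'.const_mul _)) (hpint.mul_const _),
    integral_add' hpφ (hFs'.const_mul _), integral_const_mul, integral_mul_const,
    integral_marginal hFs, integral_marginal hGint] at hfibres
  rw [← integral_marginal hL]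
  unfold logSobolevConst
  refine hfibres.trans ?_
  linarith

end Strip

section Cayley

/-- The conformal bijection `c * tanh (w / 2)` from the strip `|Im w| < π / 2` onto the unit disc,
followed by the rotation by `c`. -/
noncomputable def cayley (c : Circle) (w : ℂ) : ℂ :=
  c * ((Complex.exp w - 1) / (Complex.exp w + 1))

/-- The derivative of `cayley`. -/
noncomputable def cayleyDeriv (c : Circle) (w : ℂ) : ℂ :=
  c * (2 * Complex.exp w / (Complex.exp w + 1) ^ 2)

/-- The inverse of `cayley`. -/
noncomputable def cayleyInv (c : Circle) (ζ : ℂ) : ℂ :=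
  Complex.log ((1 + (c : ℂ)⁻¹ * ζ) / (1 - (c : ℂ)⁻¹ * ζ))

variable {c : Circle} {w ζ : ℂ}

lemma exp_add_one_ne_zero (hw : w.im ∈ Ioo (-(π / 2)) (π / 2)) : Complex.exp w + 1 ≠ 0 := by
  intro h
  have hre := congrArg Complex.re h
  simp only [Complex.add_re, Complex.exp_re, Complex.one_re, Complex.zero_re] at hre
  linarith [mul_pos (Real.exp_pos w.re) (Real.cos_pos_of_mem_Ioo hw)]

lemma hasDerivAt_cayley (hw : w.im ∈ Ioo (-(π / 2)) (π / 2)) :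
    HasDerivAt (cayley c) (cayleyDeriv c w) w := by
  have hexp := Complex.hasDerivAt_exp w
  refine (((hexp.sub_const 1).div (hexp.add_const 1) (exp_add_one_ne_zero hw)).const_mul
    (c : ℂ)).congr_deriv ?_
  rw [cayleyDeriv]
  ring

lemma one_sub_norm_cayley_sq (hw : w.im ∈ Ioo (-(π / 2)) (π / 2)) :
    1 - ‖cayley c w‖ ^ 2
      = 4 * (Real.exp w.re * Real.cos w.im) / ‖Complex.exp w + 1‖ ^ 2 := by
  have hne : ‖Complex.exp w + 1‖ ^ 2 ≠ 0 :=
    pow_ne_zero 2 (norm_ne_zero_iff.2 (exp_add_one_ne_zero hw))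
  rw [cayley, norm_mul, Circle.norm_coe, one_mul, norm_div, div_pow, eq_div_iff hne, sub_mul,
    div_mul_cancel₀ _ hne, ← Complex.exp_re, ← Complex.normSq_eq_norm_sq,
    ← Complex.normSq_eq_norm_sq, Complex.normSq_apply, Complex.normSq_apply]
  simp only [Complex.add_re, Complex.add_im, Complex.sub_re, Complex.sub_im, Complex.one_re,
    Complex.one_im]
  ring

lemma cayley_mem_ball (hw : w.im ∈ Ioo (-(π / 2)) (π / 2)) : cayley c w ∈ ball (0 : ℂ) 1 := by
  have hpos : 0 < 1 - ‖cayley c w‖ ^ 2 := by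
    rw [one_sub_norm_cayley_sq hw]
    have := Real.cos_pos_of_mem_Ioo hw
    have := norm_pos_iff.2 (exp_add_one_ne_zero hw)
    positivity
  rw [mem_ball_zero_iff]
  nlinarith [norm_nonneg (cayley c w)]

lemma norm_cayleyDeriv_sq_mul (hw : w.im ∈ Ioo (-(π / 2)) (π / 2)) :
    ‖cayleyDeriv c w‖ ^ 2 * (4 * ((1 - ‖cayley c w‖ ^ 2) ^ 2)⁻¹) = (Real.cos w.im ^ 2)⁻¹ := by
  have := norm_ne_zero_iff.2 (exp_add_one_ne_zero hw)
  have := (Real.cos_pos_of_mem_Ioo hw).ne'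
  have := (Real.exp_pos w.re).ne'
  rw [one_sub_norm_cayley_sq hw, cayleyDeriv]
  simp only [norm_mul, norm_div, norm_pow, Complex.norm_exp, Circle.norm_coe, Complex.norm_ofNat]
  field_simp
  norm_num

lemma inv_mul_cayley_im_nonpos_iff (hw : w.im ∈ Ioo (-(π / 2)) (π / 2)) :
    ((c : ℂ)⁻¹ * cayley c w).im ≤ 0 ↔ w.im ≤ 0 := by
  have hne : 0 < Complex.normSq (Complex.exp w + 1) :=
    Complex.normSq_pos.2 (exp_add_one_ne_zero hw)
  have him : ((c : ℂ)⁻¹ * cayley c w).im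
      = 2 * Real.exp w.re / Complex.normSq (Complex.exp w + 1) * Real.sin w.im := by
    rw [cayley, inv_mul_cancel_left₀ c.coe_ne_zero, Complex.div_im]
    simp only [Complex.add_re, Complex.add_im, Complex.sub_re, Complex.sub_im, Complex.one_re,
      Complex.one_im, Complex.exp_im]
    field_simp
    ring
  have hsin : Real.sin w.im ≤ 0 ↔ w.im ≤ 0 := by
    simpa using Real.strictMonoOn_sin.le_iff_le (Ioo_subset_Icc_self hw)
      (⟨by linarith [Real.pi_pos], by positivity⟩ : (0 : ℝ) ∈ Icc (-(π / 2)) (π / 2))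
  have hpos : 0 < 2 * Real.exp w.re / Complex.normSq (Complex.exp w + 1) := by positivity
  rw [him, ← hsin]
  simpa only [mul_zero] using mul_le_mul_iff_right₀ (c := 0) hpos

lemma cayleyInv_cayley (hw : w.im ∈ Ioo (-(π / 2)) (π / 2)) :
    cayleyInv c (cayley c w) = w := by
  have hne := exp_add_one_ne_zero hw
  have hexp : (1 + (Complex.exp w - 1) / (Complex.exp w + 1))
      / (1 - (Complex.exp w - 1) / (Complex.exp w + 1)) = Complex.exp w := by
    have : 1 - (Complex.exp w - 1) / (Complex.exp w + 1) = 2 / (Complex.exp w + 1) := by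
      field_simp
      ring
    rw [this]
    field_simp
    ring
  rw [cayleyInv, cayley, inv_mul_cancel_left₀ c.coe_ne_zero, hexp]
  exact Complex.log_exp (by linarith [hw.1, Real.pi_pos]) (by linarith [hw.2, Real.pi_pos])

lemma one_sub_ne_zero_of_norm_lt_one (hζ : ‖ζ‖ < 1) : 1 - ζ ≠ 0 := by
  rintro h
  simp [← sub_eq_zero.1 h] at hζ

lemma one_add_div_one_sub_re_pos (hζ : ‖ζ‖ < 1) : 0 < ((1 + ζ) / (1 - ζ)).re := by
  have hpos : 0 < Complex.normSq (1 - ζ) :=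
    Complex.normSq_pos.2 (one_sub_ne_zero_of_norm_lt_one hζ)
  have hre : ((1 + ζ) / (1 - ζ)).re = (1 - Complex.normSq ζ) / Complex.normSq (1 - ζ) := by
    rw [Complex.div_re, Complex.normSq_apply ζ]
    simp only [Complex.add_re, Complex.add_im, Complex.sub_re, Complex.sub_im, Complex.one_re,
      Complex.one_im]
    field_simp
    ring
  rw [hre, Complex.normSq_eq_norm_sq ζ]
  exact div_pos (by nlinarith [norm_nonneg ζ]) hpos

lemma norm_inv_mul (c : Circle) (ζ : ℂ) : ‖(c : ℂ)⁻¹ * ζ‖ = ‖ζ‖ := by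
  rw [norm_mul, norm_inv, Circle.norm_coe, inv_one, one_mul]

lemma cayleyInv_im_mem (hζ : ζ ∈ ball (0 : ℂ) 1) :
    (cayleyInv c ζ).im ∈ Ioo (-(π / 2)) (π / 2) := by
  rw [mem_ball_zero_iff, ← norm_inv_mul c] at hζ
  rw [cayleyInv, Complex.log_im, mem_Ioo, ← abs_lt, Complex.abs_arg_lt_pi_div_two_iff]
  exact Or.inl (one_add_div_one_sub_re_pos hζ)

lemma cayley_cayleyInv (hζ : ζ ∈ ball (0 : ℂ) 1) : cayley c (cayleyInv c ζ) = ζ := by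
  rw [mem_ball_zero_iff, ← norm_inv_mul c] at hζ
  have hpos := one_add_div_one_sub_re_pos hζ
  have hne := one_sub_ne_zero_of_norm_lt_one hζ
  rw [cayley, cayleyInv, Complex.exp_log (by rintro h; simp [h] at hpos),
    div_add_one hne, div_sub_one hne, div_div_div_cancel_right₀ hne]
  have hc := c.coe_ne_zero
  field_simp
  ring

lemma continuousOn_cayleyInv : ContinuousOn (cayleyInv c) (ball 0 1) := by
  refine ContinuousOn.clog (ContinuousOn.div (by fun_prop) (by fun_prop) ?_) ?_ <;>
    intro ζ hζ <;> rw [mem_ball_zero_iff, ← norm_inv_mul c] at hζ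
  · exact one_sub_ne_zero_of_norm_lt_one hζ
  · exact Or.inl (one_add_div_one_sub_re_pos hζ)

end Cayley

section ChangeOfVariables

variable {c : Circle}

lemma det_restrictScalars_toSpanSingleton (a : ℂ) :
    (ContinuousLinearMap.restrictScalars ℝ (ContinuousLinearMap.toSpanSingleton ℂ a)).det
      = ‖a‖ ^ 2 := by
  rw [← Complex.normSq_eq_norm_sq, ← Algebra.norm_complex_apply, Algebra.norm_apply,
    ContinuousLinearMap.det]
  congr 1
  ext x
  exact mul_comm x a

/-- The rotated conformal bijection from `strip` onto the unit disc. -/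
noncomputable def stripToDisc (c : Circle) (z : ℝ × ℝ) : ℂ :=
  cayley c (Complex.measurableEquivRealProd.symm z)

/-- The derivative of `stripToDisc` as a complex number. -/
noncomputable def stripToDiscDeriv (c : Circle) (z : ℝ × ℝ) : ℂ :=
  cayleyDeriv c (Complex.measurableEquivRealProd.symm z)

lemma injOn_cayley : InjOn (cayley c) (Complex.im ⁻¹' Ioo (-(π / 2)) (π / 2)) :=
  LeftInvOn.injOn fun _ hw => cayleyInv_cayley hw

lemma image_cayley : cayley c '' (Complex.im ⁻¹' Ioo (-(π / 2)) (π / 2)) = ball 0 1 :=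
  Subset.antisymm (image_subset_iff.2 fun _ hw => cayley_mem_ball hw) fun _ hζ =>
    ⟨_, cayleyInv_im_mem hζ, cayley_cayleyInv hζ⟩

lemma hasFDerivWithinAt_cayley {w : ℂ} (hw : w ∈ Complex.im ⁻¹' Ioo (-(π / 2)) (π / 2)) :
    HasFDerivWithinAt (cayley c) (ContinuousLinearMap.restrictScalars ℝ
      (ContinuousLinearMap.toSpanSingleton ℂ (cayleyDeriv c w)))
      (Complex.im ⁻¹' Ioo (-(π / 2)) (π / 2)) w :=
  ((hasDerivAt_cayley hw).hasFDerivAt.restrictScalars ℝ).hasFDerivWithinAt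

lemma measurableSet_im_preimage_Ioo :
    MeasurableSet (Complex.im ⁻¹' Ioo (-(π / 2)) (π / 2)) :=
  Complex.measurable_im measurableSet_Ioo

lemma setIntegral_ball_eq_setIntegral_strip (c : Circle) (h : ℂ → ℝ) :
    ∫ ζ in ball (0 : ℂ) 1, h ζ
      = ∫ z in strip, ‖stripToDiscDeriv c z‖ ^ 2 * h (stripToDisc c z) := by
  rw [← image_cayley (c := c), integral_image_eq_integral_abs_det_fderiv_smul volume
    measurableSet_im_preimage_Ioo (fun w => hasFDerivWithinAt_cayley) injOn_cayley]
  simp only [det_restrictScalars_toSpanSingleton, abs_sq, smul_eq_mul]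
  exact (Complex.volume_preserving_equiv_real_prod.symm.setIntegral_preimage_emb
    Complex.measurableEquivRealProd.symm.measurableEmbedding _ _).symm

lemma integrableOn_ball_iff_integrableOn_strip (c : Circle) (h : ℂ → ℝ) :
    IntegrableOn h (ball (0 : ℂ) 1)
      ↔ IntegrableOn (fun z => ‖stripToDiscDeriv c z‖ ^ 2 * h (stripToDisc c z)) strip := by
  rw [← image_cayley (c := c), integrableOn_image_iff_integrableOn_abs_det_fderiv_smul volume
    measurableSet_im_preimage_Ioo (fun w => hasFDerivWithinAt_cayley) injOn_cayley]
  simp only [det_restrictScalars_toSpanSingleton, abs_sq, smul_eq_mul]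
  exact (Complex.volume_preserving_equiv_real_prod.symm.integrableOn_comp_preimage
    Complex.measurableEquivRealProd.symm.measurableEmbedding).symm

lemma integral_muDisc_eq_setIntegral_strip (c : Circle) (h : ℂ → ℝ) :
    ∫ ζ, h ζ ∂muDisc = ∫ z in strip, h (stripToDisc c z) / Real.cos z.2 ^ 2 := by
  rw [muDisc, integral_withDensity_eq_integral_toReal_smul (by fun_prop)
    (Eventually.of_forall fun _ => ENNReal.ofReal_lt_top), setIntegral_ball_eq_setIntegral_strip c]
  refine setIntegral_congr_fun isOpen_strip.measurableSet fun z hz => ?_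
  rw [ENNReal.toReal_ofReal (by positivity), smul_eq_mul, ← mul_assoc, stripToDiscDeriv,
    stripToDisc, norm_cayleyDeriv_sq_mul (w := Complex.measurableEquivRealProd.symm z) hz,
    inv_mul_eq_div]
  rfl

lemma sq_add_mul_I_sq_le (L : ℂ →L[ℝ] ℝ) (a : ℂ) :
    L a ^ 2 + L (a * Complex.I) ^ 2 ≤ ‖a‖ ^ 2 * ‖L‖ ^ 2 := by
  set α := L a
  set β := L (a * Complex.I)
  have hval : L (a * (α + β * Complex.I)) = α ^ 2 + β ^ 2 := by
    have : a * (α + β * Complex.I) = α • a + β • (a * Complex.I) := by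
      simp only [Complex.real_smul]
      ring
    rw [this, map_add, map_smul, map_smul, smul_eq_mul, smul_eq_mul, sq, sq]
  have hle : (α ^ 2 + β ^ 2) ^ 2 ≤ ‖a‖ ^ 2 * ‖L‖ ^ 2 * (α ^ 2 + β ^ 2) := by
    have h := pow_le_pow_left₀ (norm_nonneg _) (L.le_opNorm (a * (α + β * Complex.I))) 2
    rw [hval, norm_mul, Real.norm_eq_abs, sq_abs, mul_pow, mul_pow, ← Complex.normSq_eq_norm_sq
      (α + β * Complex.I), Complex.normSq_add_mul_I] at h
    linarith
  rcases (by positivity : 0 ≤ α ^ 2 + β ^ 2).eq_or_lt with h | h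
  · rw [← h]
    positivity
  · exact le_of_mul_le_mul_right (by linarith) h

end ChangeOfVariables

section Pullback

/-- The function on `ℝ × ℝ` obtained by transporting `g` from the disc to `strip`, extended by
zero. -/
noncomputable def stripPullback (c : Circle) (g : ℂ → ℝ) : ℝ × ℝ → ℝ :=
  strip.indicator fun z => g (stripToDisc c z)

variable {c : Circle} {g : ℂ → ℝ}

lemma hasFDerivAt_stripToDisc {z : ℝ × ℝ} (hz : z ∈ strip) :
    HasFDerivAt (stripToDisc c) ((ContinuousLinearMap.toSpanSingleton ℂ
      (stripToDiscDeriv c z)).restrictScalars ℝ ∘L Complex.equivRealProdCLM.symm) z :=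
  HasFDerivAt.comp z (g := cayley c) ((hasDerivAt_cayley
      (w := Complex.equivRealProdCLM.symm z) hz).hasFDerivAt.restrictScalars ℝ)
    Complex.equivRealProdCLM.symm.hasFDerivAt

lemma exists_isCompact_support_stripPullback_subset (c : Circle) (hgc : HasCompactSupport g)
    (hgU : tsupport g ⊆ ball 0 1) :
    ∃ K ⊆ strip, IsCompact K ∧ Function.support (stripPullback c g) ⊆ K := by
  refine ⟨Complex.equivRealProdCLM '' (cayleyInv c '' tsupport g), ?_,
    (hgc.isCompact.image_of_continuousOn (continuousOn_cayleyInv.mono hgU)).image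
      Complex.equivRealProdCLM.continuous, fun z hz => ?_⟩
  · rintro _ ⟨_, ⟨ζ, hζ, rfl⟩, rfl⟩
    exact cayleyInv_im_mem (hgU hζ)
  · obtain ⟨hzU, hgz⟩ := Set.indicator_apply_ne_zero.1 hz
    refine ⟨_, ⟨_, subset_tsupport g hgz, cayleyInv_cayley hzU⟩, ?_⟩
    exact Complex.equivRealProdCLM.apply_symm_apply z

lemma hasCompactSupport_stripPullback (hgc : HasCompactSupport g) (hgU : tsupport g ⊆ ball 0 1) :
    HasCompactSupport (stripPullback c g) := by
  obtain ⟨K, -, hK, hsub⟩ := exists_isCompact_support_stripPullback_subset c hgc hgU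
  exact hK.of_isClosed_subset (isClosed_tsupport _) (closure_minimal hsub hK.isClosed)

lemma tsupport_stripPullback_subset (hgc : HasCompactSupport g) (hgU : tsupport g ⊆ ball 0 1) :
    tsupport (stripPullback c g) ⊆ strip := by
  obtain ⟨K, hKU, hK, hsub⟩ := exists_isCompact_support_stripPullback_subset c hgc hgU
  exact (closure_minimal hsub hK.isClosed).trans hKU

lemma hasFDerivAt_stripPullback (hg : Differentiable ℝ g) {z : ℝ × ℝ} (hz : z ∈ strip) :
    HasFDerivAt (stripPullback c g) (fderiv ℝ g (stripToDisc c z) ∘L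
      ((ContinuousLinearMap.toSpanSingleton ℂ (stripToDiscDeriv c z)).restrictScalars ℝ ∘L
        Complex.equivRealProdCLM.symm)) z :=
  ((hg _).hasFDerivAt.comp z (hasFDerivAt_stripToDisc hz)).congr_of_eventuallyEq <|
    (eqOn_indicator (s := strip)).eventuallyEq_of_mem (isOpen_strip.mem_nhds hz)

lemma stripPullback_eventuallyEq_zero (hgc : HasCompactSupport g) (hgU : tsupport g ⊆ ball 0 1)
    {z : ℝ × ℝ} (hz : z ∉ strip) : stripPullback c g =ᶠ[𝓝 z] 0 :=
  notMem_tsupport_iff_eventuallyEq.1 fun h => hz (tsupport_stripPullback_subset hgc hgU h)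

lemma differentiable_stripPullback (hg : Differentiable ℝ g) (hgc : HasCompactSupport g)
    (hgU : tsupport g ⊆ ball 0 1) : Differentiable ℝ (stripPullback c g) := fun z => by
  by_cases hz : z ∈ strip
  · exact (hasFDerivAt_stripPullback hg hz).differentiableAt
  · exact (differentiableAt_const 0).congr_of_eventuallyEq
      (stripPullback_eventuallyEq_zero hgc hgU hz)

lemma fderiv_stripPullback_sq_add_sq_le (hg : Differentiable ℝ g) (hgc : HasCompactSupport g)
    (hgU : tsupport g ⊆ ball 0 1) (z : ℝ × ℝ) :
    fderiv ℝ (stripPullback c g) z (1, 0) ^ 2 + fderiv ℝ (stripPullback c g) z (0, 1) ^ 2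
      ≤ strip.indicator
          (fun z => ‖stripToDiscDeriv c z‖ ^ 2 * ‖fderiv ℝ g (stripToDisc c z)‖ ^ 2) z := by
  by_cases hz : z ∈ strip
  · rw [(hasFDerivAt_stripPullback hg hz).fderiv, indicator_of_mem hz]
    convert sq_add_mul_I_sq_le (fderiv ℝ g (stripToDisc c z)) (stripToDiscDeriv c z) using 4 <;>
      simp [Complex.equivRealProdCLM_symm_apply, mul_comm]
  · rw [(stripPullback_eventuallyEq_zero hgc hgU hz).fderiv_eq, indicator_of_notMem hz]
    simp

end Pullback

section Bisection

/-- The closed half-plane below the real line rotated by `c`. -/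
def halfPlane (c : Circle) : Set ℂ := {ζ | ((c : ℂ)⁻¹ * ζ).im ≤ 0}

lemma measurableSet_halfPlane (c : Circle) : MeasurableSet (halfPlane c) :=
  measurableSet_le (by fun_prop) measurable_const

variable {μ : Measure ℂ} {u : ℂ → ℝ}

lemma ae_inv_mul_im_ne_zero (hμ : μ ≪ volume) (c : Circle) :
    ∀ᵐ ζ ∂μ, ((c : ℂ)⁻¹ * ζ).im ≠ 0 := by
  let L : ℂ →ₗ[ℝ] ℝ := Complex.imLm ∘ₗ LinearMap.mulLeft ℝ (c : ℂ)⁻¹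
  have hL : LinearMap.ker L ≠ ⊤ := fun h => by
    have hmem : (c : ℂ) * Complex.I ∈ LinearMap.ker L := h ▸ Submodule.mem_top
    simp [L] at hmem
  exact hμ.ae_le (measure_eq_zero_iff_ae_notMem.1 (Measure.addHaar_submodule volume _ hL))

lemma continuousAt_indicator_halfPlane {ζ : ℂ} {α : ℝ}
    (hζ : ((Circle.exp α : ℂ)⁻¹ * ζ).im ≠ 0) :
    ContinuousAt (fun α : ℝ => (halfPlane (Circle.exp α)).indicator u ζ) α := by
  have hcont : Continuous fun α : ℝ => ((Circle.exp α : ℂ)⁻¹ * ζ).im := by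
    simp only [← Circle.coe_inv]
    fun_prop
  rcases hζ.lt_or_gt with h | h
  · refine continuousAt_const.congr (f := fun _ => u ζ) ?_
    filter_upwards [hcont.continuousAt.eventually_lt_const h] with β hβ
    exact (indicator_of_mem (show ζ ∈ halfPlane (Circle.exp β) from hβ.le) u).symm
  · refine continuousAt_const.congr (f := fun _ => 0) ?_
    filter_upwards [hcont.continuousAt.eventually_const_lt h] with β hβ
    exact (indicator_of_notMem (fun h : ζ ∈ halfPlane (Circle.exp β) => hβ.not_ge h) u).symm

lemma continuous_setIntegral_halfPlane (hμ : μ ≪ volume) (hu : Integrable u μ) :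
    Continuous fun α : ℝ => ∫ ζ in halfPlane (Circle.exp α), u ζ ∂μ := by
  simp only [← integral_indicator (measurableSet_halfPlane _)]
  refine continuous_iff_continuousAt.2 fun α => continuousAt_of_dominated
    (bound := fun ζ => ‖u ζ‖) (Eventually.of_forall fun β =>
      hu.aestronglyMeasurable.indicator (measurableSet_halfPlane _))
    (Eventually.of_forall fun β => Eventually.of_forall fun ζ => norm_indicator_le_norm_self _ _)
    hu.norm ?_
  filter_upwards [ae_inv_mul_im_ne_zero hμ (Circle.exp α)] with ζ hζ
  exact continuousAt_indicator_halfPlane hζ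

lemma setIntegral_halfPlane_add (hμ : μ ≪ volume) (hu : Integrable u μ) :
    ∫ ζ in halfPlane (Circle.exp 0), u ζ ∂μ + ∫ ζ in halfPlane (Circle.exp π), u ζ ∂μ
      = ∫ ζ, u ζ ∂μ := by
  have hcompl : halfPlane (Circle.exp π) =ᵐ[μ] ((halfPlane (Circle.exp 0))ᶜ : Set ℂ) := by
    refine eventuallyEq_set.2 ?_
    filter_upwards [ae_inv_mul_im_ne_zero hμ (Circle.exp 0)] with ζ hζ
    simp only [Circle.exp_zero, Circle.coe_one, inv_one, one_mul] at hζ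
    simpa [halfPlane, Circle.coe_exp] using hζ.symm.le_iff_lt
  rw [setIntegral_congr_set hcompl, integral_add_compl (measurableSet_halfPlane _) hu]

/-- Rotating by `π` exchanges a half-plane with its complement, so the intermediate value theorem
applies. -/
lemma exists_setIntegral_halfPlane_eq_half (hμ : μ ≪ volume) (hu : Integrable u μ) :
    ∃ c : Circle, ∫ ζ in halfPlane c, u ζ ∂μ = (∫ ζ, u ζ ∂μ) / 2 := by
  have hsum := setIntegral_halfPlane_add hμ hu
  have hmem : (∫ ζ, u ζ ∂μ) / 2 ∈ uIcc (∫ ζ in halfPlane (Circle.exp 0), u ζ ∂μ)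
      (∫ ζ in halfPlane (Circle.exp π), u ζ ∂μ) := by
    rw [mem_uIcc, ← hsum]
    by_contra! h
    grind
  obtain ⟨α, -, hα⟩ := intermediate_value_uIcc
    (continuous_setIntegral_halfPlane hμ hu).continuousOn hmem
  exact ⟨_, hα⟩

end Bisection

section Disc

variable {c : Circle} {g : ℂ → ℝ} {b : ℝ}

lemma muDisc_absolutelyContinuous : muDisc ≪ volume :=
  (withDensity_absolutelyContinuous _ _).trans
    (Measure.absolutelyContinuous_of_le Measure.restrict_le_self)

lemma integrable_muDisc (hg : Continuous g) (hgc : HasCompactSupport g)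
    (hgU : tsupport g ⊆ ball 0 1) : Integrable g muDisc := by
  refine (integrable_withDensity_iff_integrable_smul' (by fun_prop)
    (Eventually.of_forall fun _ => ENNReal.ofReal_lt_top)).2 ?_
  simp only [ENNReal.toReal_ofReal (by positivity : (0 : ℝ) ≤ 4 * (_ ^ 2)⁻¹), smul_eq_mul]
  have hdensity : ContinuousOn (fun ζ : ℂ => 4 * ((1 - ‖ζ‖ ^ 2) ^ 2)⁻¹) (ball 0 1) := by
    have hne : ∀ ζ ∈ ball (0 : ℂ) 1, (1 - ‖ζ‖ ^ 2) ^ 2 ≠ 0 := fun ζ hζ =>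
      pow_ne_zero 2 (by nlinarith [norm_nonneg ζ, mem_ball_zero_iff.1 hζ])
    fun_prop (disch := assumption)
  simpa only [mul_comm, IntegrableOn] using
    (integrable_mul_of_tsupport_subset hg hgc isOpen_ball hgU hdensity).integrableOn

lemma integral_comp_stripPullback_div (c : Circle) {Φ : ℝ → ℝ} (hΦ : Φ 0 = 0) :
    ∫ z, Φ (stripPullback c g z) / Real.cos z.2 ^ 2 = ∫ ζ, Φ (g ζ) ∂muDisc := by
  rw [integral_muDisc_eq_setIntegral_strip c, ← integral_indicator isOpen_strip.measurableSet]
  refine integral_congr_ae (Eventually.of_forall fun z => ?_)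
  by_cases hz : z ∈ strip <;> simp [stripPullback, hz, hΦ]

lemma stripPullback_indicator_halfPlane :
    stripPullback c ((halfPlane c).indicator g)
      = (Prod.snd ⁻¹' Iic 0).indicator (stripPullback c g) := by
  ext z
  by_cases hz : z ∈ strip
  · rw [stripPullback, indicator_of_mem hz]
    refine indicator_eq_indicator ?_ (indicator_of_mem hz fun z => g (stripToDisc c z)).symm
    exact inv_mul_cayley_im_nonpos_iff (w := Complex.measurableEquivRealProd.symm z) hz
  · simp [stripPullback, indicator, hz]

lemma setIntegral_stripPullback_sq_div (c : Circle) :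
    ∫ z in Prod.snd ⁻¹' Iic 0, stripPullback c g z ^ 2 / Real.cos z.2 ^ 2
      = ∫ ζ in halfPlane c, g ζ ^ 2 ∂muDisc := by
  have h := integral_comp_stripPullback_div (g := (halfPlane c).indicator g) c
    (Φ := (· ^ 2)) (zero_pow two_ne_zero)
  rw [stripPullback_indicator_halfPlane] at h
  rw [← integral_indicator (measurable_snd measurableSet_Iic),
    ← integral_indicator (measurableSet_halfPlane c)]
  refine Eq.trans (integral_congr_ae (Eventually.of_forall fun z => ?_))
    (h.trans (integral_congr_ae (Eventually.of_forall fun ζ => ?_)))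
  · by_cases hz : z ∈ Prod.snd ⁻¹' Iic (0 : ℝ) <;> simp [indicator, hz]
  · by_cases hζ : ζ ∈ halfPlane c <;> simp [hζ]

lemma integrable_fderiv_sq_of_add_le {F h : ℝ × ℝ → ℝ} {v w : ℝ × ℝ} (hh : Integrable h)
    (hle : ∀ z, fderiv ℝ F z v ^ 2 + fderiv ℝ F z w ^ 2 ≤ h z) :
    Integrable fun z => fderiv ℝ F z v ^ 2 :=
  hh.mono' ((measurable_fderiv_apply_const ℝ F v).pow_const 2).aestronglyMeasurable
    (Eventually.of_forall fun z => by
      rw [Real.norm_of_nonneg (sq_nonneg _)]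
      linarith [hle z, sq_nonneg (fderiv ℝ F z w)])

theorem integral_muDisc_mul_log_le (hb : 0 < b) (hg : Differentiable ℝ g)
    (hgc : HasCompactSupport g) (hgU : tsupport g ⊆ ball 0 1)
    (hgE : IntegrableOn (fun ζ => ‖fderiv ℝ g ζ‖ ^ 2) (ball 0 1)) :
    ∫ ζ, g ζ ^ 2 * Real.log (g ζ ^ 2) ∂muDisc
      ≤ (∫ ζ, g ζ ^ 2 ∂muDisc) * Real.log (∫ ζ, g ζ ^ 2 ∂muDisc)
        + 2 * b * (∫ ζ in ball 0 1, ‖fderiv ℝ g ζ‖ ^ 2)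
        - (∫ ζ, g ζ ^ 2 ∂muDisc) * logSobolevConst b := by
  obtain ⟨c, hc⟩ := exists_setIntegral_halfPlane_eq_half muDisc_absolutelyContinuous
    (integrable_muDisc (hg.continuous.fun_pow 2) (hasCompactSupport_sq hgc)
      ((tsupport_sq g).trans_subset hgU))
  have hmass := integral_comp_stripPullback_div (g := g) c (Φ := (· ^ 2)) (zero_pow two_ne_zero)
  have hentropy := integral_comp_stripPullback_div (g := g) c
    (Φ := fun x => x ^ 2 * Real.log (x ^ 2)) (by simp)
  have hE := (integrable_indicator_iff isOpen_strip.measurableSet).2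
    ((integrableOn_ball_iff_integrableOn_strip c _).1 hgE)
  have hle := fderiv_stripPullback_sq_add_sq_le (c := c) hg hgc hgU
  have hs := integrable_fderiv_sq_of_add_le hE hle
  have hθ := integrable_fderiv_sq_of_add_le hE fun z => (add_comm _ _).trans_le (hle z)
  have henergy := integral_mono (hs.add hθ) hE hle
  rw [integral_add' hs hθ, integral_indicator isOpen_strip.measurableSet,
    ← setIntegral_ball_eq_setIntegral_strip c fun ζ => ‖fderiv ℝ g ζ‖ ^ 2] at henergy
  have h := integral_mul_log_div_cos_sq_le hb (differentiable_stripPullback hg hgc hgU)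
    (hasCompactSupport_stripPullback hgc hgU) (tsupport_stripPullback_subset hgc hgU) hs hθ
    (by rw [setIntegral_stripPullback_sq_div, hc, hmass])
  rw [hentropy, hmass] at h
  exact h.trans (by gcongr)

end Disc

section SoftThreshold

/-- A continuously differentiable odd contraction vanishing on `[-ε, ε]`; it is the identity up to
an error tending to zero with `ε`. Its value at `s = 0` relies on division by zero being zero. -/
noncomputable def softThreshold (ε s : ℝ) : ℝ := max 0 (|s| - ε) ^ 2 / s

lemma hasDerivAt_max_zero_sq (x : ℝ) : HasDerivAt (fun y => max 0 y ^ 2) (2 * max 0 x) x := by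
  rcases lt_trichotomy x 0 with hx | rfl | hx
  · rw [max_eq_left hx.le, mul_zero]
    refine (hasDerivAt_const x 0).congr_of_eventuallyEq ?_
    filter_upwards [eventually_lt_nhds hx] with y hy
    rw [max_eq_left hy.le, zero_pow two_ne_zero]
  · have hO : (fun y : ℝ => max 0 y ^ 2) =O[𝓝 0] fun y => ‖y - 0‖ ^ 2 :=
      Asymptotics.IsBigO.of_bound' (Eventually.of_forall fun y => by
        rw [sub_zero, norm_pow, norm_pow, norm_norm]
        exact pow_le_pow_left₀ (norm_nonneg _) (by simp [abs_of_nonneg, le_abs_self]) 2)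
    simpa using (hO.hasFDerivAt (𝕜 := ℝ) one_lt_two).hasDerivAt
  · rw [max_eq_right hx.le]
    have h := (hasDerivAt_id x).fun_pow 2
    refine (h.congr_deriv (by simp)).congr_of_eventuallyEq ?_
    filter_upwards [eventually_gt_nhds hx] with y hy
    rw [max_eq_right hy.le, id]

variable {ε s : ℝ}

lemma softThreshold_eq_zero (h : |s| ≤ ε) : softThreshold ε s = 0 := by
  simp [softThreshold, max_eq_left (sub_nonpos.2 h)]

lemma abs_softThreshold_le (hε : 0 ≤ ε) (s : ℝ) : |softThreshold ε s| ≤ |s| := by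
  have hm : max 0 (|s| - ε) ≤ |s| := max_le (abs_nonneg s) (by linarith)
  rw [softThreshold, abs_div, abs_of_nonneg (sq_nonneg _)]
  refine div_le_of_le_mul₀ (abs_nonneg s) (abs_nonneg s) ?_
  nlinarith [le_max_left 0 (|s| - ε)]

lemma exists_hasDerivAt_softThreshold (hε : 0 < ε) (s : ℝ) :
    ∃ d, |d| ≤ 1 ∧ HasDerivAt (softThreshold ε) d s := by
  rcases eq_or_ne s 0 with rfl | hs
  · refine ⟨0, by simp, (hasDerivAt_const 0 0).congr_of_eventuallyEq ?_⟩
    filter_upwards [continuous_abs.continuousAt.eventually_lt_const (by simpa using hε)] with t ht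
    exact softThreshold_eq_zero ht.le
  · have h := ((hasDerivAt_max_zero_sq (|s| - ε)).comp s
      ((hasDerivAt_abs hs).sub_const ε)).div (hasDerivAt_id s) hs
    have hs' : 0 < |s| := abs_pos.2 hs
    simp only [Function.comp_apply, id, mul_assoc, sign_mul_self, ← sq_abs s] at h
    set m := max 0 (|s| - ε)
    have h0 : 0 ≤ m / |s| := by positivity
    have h1 : m / |s| ≤ 1 := (div_le_one hs').2 (max_le hs'.le (by linarith))
    refine ⟨1 - (1 - m / |s|) ^ 2, abs_le.2 ⟨by nlinarith, by nlinarith⟩, h.congr_deriv ?_⟩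
    field_simp
    ring

lemma tendsto_softThreshold (s : ℝ) :
    Tendsto (fun ε => softThreshold ε s) (𝓝[>] 0) (𝓝 s) := by
  have hcont : Continuous fun ε => softThreshold ε s := by
    unfold softThreshold
    fun_prop
  have h0 : softThreshold 0 s = s := by
    rw [softThreshold, sub_zero, max_eq_right (abs_nonneg s), sq_abs, sq, mul_self_div_self]
  exact (h0 ▸ hcont.tendsto 0).mono_left nhdsWithin_le_nhds

end SoftThreshold

section Truncation

/-- The truncation of `f` at height `ε`, extended by zero outside the unit disc. -/
noncomputable def truncation (ε : ℝ) (f : ℂ → ℝ) : ℂ → ℝ :=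
  (ball 0 1).indicator fun ζ => softThreshold ε (f ζ)

variable {f : ℂ → ℝ} {ε : ℝ}

lemma truncation_of_mem {ζ : ℂ} (hζ : ζ ∈ ball 0 1) :
    truncation ε f ζ = softThreshold ε (f ζ) :=
  indicator_of_mem hζ _

/-- `f` tends to zero at the unit circle. -/
def VanishesAtBoundary (f : ℂ → ℝ) : Prop :=
  ∀ ε > 0, ∃ r < 1, ∀ ζ ∈ ball (0 : ℂ) 1, r < ‖ζ‖ → |f ζ| < ε

lemma vanishesAtBoundary_of_nonneg (hf : ∀ ζ ∈ ball (0 : ℂ) 1, 0 ≤ f ζ)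
    (hlim : ∀ ε > 0, ∃ r < 1, ∀ ζ ∈ ball (0 : ℂ) 1, r < ‖ζ‖ → f ζ < ε) : VanishesAtBoundary f :=
  fun ε hε => (hlim ε hε).imp fun _ ⟨hr, h⟩ =>
    ⟨hr, fun ζ hζ hrζ => (abs_of_nonneg (hf ζ hζ)).trans_lt (h ζ hζ hrζ)⟩

lemma VanishesAtBoundary.exists_tsupport_truncation_subset (hf : VanishesAtBoundary f)
    (hε : 0 < ε) : ∃ r < 1, tsupport (truncation ε f) ⊆ closedBall 0 r := by
  obtain ⟨r, hr, hfr⟩ := hf ε hε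
  refine ⟨r, hr, closure_minimal (fun ζ hζ => ?_) isClosed_closedBall⟩
  rw [mem_closedBall_zero_iff]
  by_contra! h
  exact hζ (indicator_apply_eq_zero.2 fun hb => softThreshold_eq_zero (hfr ζ hb h).le)

lemma VanishesAtBoundary.hasCompactSupport_truncation (hf : VanishesAtBoundary f) (hε : 0 < ε) :
    HasCompactSupport (truncation ε f) := by
  obtain ⟨r, -, hsub⟩ := hf.exists_tsupport_truncation_subset hε
  exact (isCompact_closedBall 0 r).of_isClosed_subset (isClosed_tsupport _) hsub

lemma VanishesAtBoundary.tsupport_truncation_subset (hf : VanishesAtBoundary f) (hε : 0 < ε) :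
    tsupport (truncation ε f) ⊆ ball 0 1 := by
  obtain ⟨r, hr, hsub⟩ := hf.exists_tsupport_truncation_subset hε
  exact hsub.trans (closedBall_subset_ball hr)

lemma exists_hasFDerivAt_truncation (hε : 0 < ε) {ζ : ℂ} (hζ : ζ ∈ ball 0 1)
    (hf : DifferentiableAt ℝ f ζ) :
    ∃ d : ℝ, |d| ≤ 1 ∧ HasFDerivAt (truncation ε f) (d • fderiv ℝ f ζ) ζ := by
  obtain ⟨d, hd, hderiv⟩ := exists_hasDerivAt_softThreshold hε (f ζ)
  refine ⟨d, hd, (hderiv.comp_hasFDerivAt ζ hf.hasFDerivAt).congr_of_eventuallyEq ?_⟩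
  filter_upwards [isOpen_ball.mem_nhds hζ] with ω hω
  exact truncation_of_mem hω

lemma norm_fderiv_truncation_le (hε : 0 < ε) {ζ : ℂ} (hζ : ζ ∈ ball 0 1)
    (hf : DifferentiableAt ℝ f ζ) : ‖fderiv ℝ (truncation ε f) ζ‖ ≤ ‖fderiv ℝ f ζ‖ := by
  obtain ⟨d, hd, hderiv⟩ := exists_hasFDerivAt_truncation hε hζ hf
  rw [hderiv.fderiv, norm_smul]
  exact mul_le_of_le_one_left (norm_nonneg _) hd

lemma VanishesAtBoundary.differentiable_truncation (hf : VanishesAtBoundary f)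
    (hdiff : ∀ ζ ∈ ball 0 1, DifferentiableAt ℝ f ζ) (hε : 0 < ε) :
    Differentiable ℝ (truncation ε f) := fun ζ => by
  by_cases hζ : ζ ∈ ball 0 1
  · obtain ⟨d, -, hderiv⟩ := exists_hasFDerivAt_truncation hε hζ (hdiff ζ hζ)
    exact hderiv.differentiableAt
  · exact (differentiableAt_const 0).congr_of_eventuallyEq
      (notMem_tsupport_iff_eventuallyEq.1 fun h => hζ (hf.tsupport_truncation_subset hε h))

lemma ae_mem_ball_muDisc : ∀ᵐ ζ ∂muDisc, ζ ∈ ball (0 : ℂ) 1 :=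
  (withDensity_absolutelyContinuous _ _).ae_le (ae_restrict_mem measurableSet_ball)

lemma VanishesAtBoundary.tendsto_integral_comp_truncation (hf : VanishesAtBoundary f)
    (hdiff : ∀ ζ ∈ ball 0 1, DifferentiableAt ℝ f ζ) {Φ B : ℝ → ℝ} (hΦ : Continuous Φ)
    (hB : Integrable (fun ζ => B (f ζ)) muDisc) (hle : ∀ p s, |p| ≤ |s| → |Φ p| ≤ B s) :
    Tendsto (fun ε => ∫ ζ, Φ (truncation ε f ζ) ∂muDisc) (𝓝[>] 0)
      (𝓝 (∫ ζ, Φ (f ζ) ∂muDisc)) := by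
  refine tendsto_integral_filter_of_dominated_convergence (fun ζ => B (f ζ)) ?_ ?_ hB ?_
  · filter_upwards [self_mem_nhdsWithin] with ε hε
    exact (hΦ.comp (hf.differentiable_truncation hdiff hε).continuous).aestronglyMeasurable
  · filter_upwards [self_mem_nhdsWithin] with ε (hε : 0 < ε)
    filter_upwards [ae_mem_ball_muDisc] with ζ hζ
    rw [truncation_of_mem hζ]
    exact hle _ _ (abs_softThreshold_le hε.le _)
  · filter_upwards [ae_mem_ball_muDisc] with ζ hζ
    simp only [truncation_of_mem hζ]
    exact (hΦ.tendsto _).comp (tendsto_softThreshold _)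

lemma abs_sq_mul_log_sq_le_of_abs_le {p s : ℝ} (h : |p| ≤ |s|) :
    |p ^ 2 * Real.log (p ^ 2)| ≤ 2 * (s ^ 2 * |Real.log s|) + s ^ 2 := by
  rcases eq_or_ne p 0 with rfl | hp
  · simp only [ne_eq, two_ne_zero, not_false_eq_true, zero_pow, zero_mul, abs_zero]
    positivity
  have hs : s ≠ 0 := abs_pos.1 ((abs_pos.2 hp).trans_le h)
  set t := (p / s) ^ 2
  have ht0 : 0 < t := by positivity
  have ht1 : t ≤ 1 := by
    rw [sq_le_one_iff_abs_le_one, abs_div]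
    exact div_le_one_of_le₀ h (abs_nonneg s)
  have hts : p ^ 2 = t * s ^ 2 := by rw [← mul_pow, div_mul_cancel₀ _ hs]
  calc |p ^ 2 * Real.log (p ^ 2)|
      = |2 * (s ^ 2 * Real.log s) * t + s ^ 2 * (Real.log t * t)| := by
        rw [hts, Real.log_mul ht0.ne' (pow_ne_zero 2 hs), Real.log_pow s 2]
        congr 1
        push_cast
        ring
    _ ≤ |2 * (s ^ 2 * Real.log s) * t| + |s ^ 2 * (Real.log t * t)| := abs_add_le _ _
    _ = 2 * (s ^ 2 * |Real.log s|) * t + s ^ 2 * |Real.log t * t| := by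
        simp only [abs_mul, abs_of_pos ht0, abs_two, abs_of_nonneg (sq_nonneg s)]
    _ ≤ 2 * (s ^ 2 * |Real.log s|) + s ^ 2 :=
        add_le_add (mul_le_of_le_one_right (by positivity) ht1)
          (mul_le_of_le_one_right (by positivity) (Real.abs_log_mul_self_lt t ht0 ht1).le)

lemma VanishesAtBoundary.integral_truncation_mul_log_le (hf : VanishesAtBoundary f)
    (hdiff : ∀ ζ ∈ ball 0 1, DifferentiableAt ℝ f ζ)
    (hgrad : IntegrableOn (fun ζ => ‖fderiv ℝ f ζ‖ ^ 2) (ball 0 1)) {b : ℝ} (hb : 0 < b)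
    (hε : 0 < ε) :
    ∫ ζ, truncation ε f ζ ^ 2 * Real.log (truncation ε f ζ ^ 2) ∂muDisc
      ≤ (∫ ζ, truncation ε f ζ ^ 2 ∂muDisc) * Real.log (∫ ζ, truncation ε f ζ ^ 2 ∂muDisc)
        + 2 * b * (∫ ζ in ball 0 1, ‖fderiv ℝ f ζ‖ ^ 2)
        - (∫ ζ, truncation ε f ζ ^ 2 ∂muDisc) * logSobolevConst b := by
  have hle : ∀ ζ ∈ ball 0 1, ‖fderiv ℝ (truncation ε f) ζ‖ ^ 2 ≤ ‖fderiv ℝ f ζ‖ ^ 2 :=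
    fun ζ hζ => pow_le_pow_left₀ (norm_nonneg _) (norm_fderiv_truncation_le hε hζ (hdiff ζ hζ)) 2
  have hE : IntegrableOn (fun ζ => ‖fderiv ℝ (truncation ε f) ζ‖ ^ 2) (ball 0 1) := by
    refine hgrad.mono' ((measurable_fderiv ℝ _).norm.pow_const 2).aestronglyMeasurable ?_
    filter_upwards [ae_restrict_mem measurableSet_ball] with ζ hζ
    rw [Real.norm_of_nonneg (sq_nonneg _)]
    exact hle ζ hζ
  refine (integral_muDisc_mul_log_le hb (hf.differentiable_truncation hdiff hε)
    (hf.hasCompactSupport_truncation hε) (hf.tsupport_truncation_subset hε) hE).trans ?_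
  gcongr _ + 2 * b * ?_ - _
  exact setIntegral_mono_on hE hgrad measurableSet_ball hle

theorem VanishesAtBoundary.integral_mul_log_le (hf : VanishesAtBoundary f)
    (hdiff : ∀ ζ ∈ ball 0 1, DifferentiableAt ℝ f ζ)
    (hgrad : IntegrableOn (fun ζ => ‖fderiv ℝ f ζ‖ ^ 2) (ball 0 1))
    (hsq : Integrable (fun ζ => f ζ ^ 2) muDisc)
    (hlog : Integrable (fun ζ => f ζ ^ 2 * |Real.log (f ζ)|) muDisc) {b : ℝ} (hb : 0 < b) :
    ∫ ζ, f ζ ^ 2 * Real.log (f ζ ^ 2) ∂muDisc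
      ≤ (∫ ζ, f ζ ^ 2 ∂muDisc) * Real.log (∫ ζ, f ζ ^ 2 ∂muDisc)
        + 2 * b * (∫ ζ in ball 0 1, ‖fderiv ℝ f ζ‖ ^ 2)
        - (∫ ζ, f ζ ^ 2 ∂muDisc) * logSobolevConst b := by
  have hbound : Integrable (fun ζ => 2 * (f ζ ^ 2 * |Real.log (f ζ)|) + f ζ ^ 2) muDisc :=
    (hlog.const_mul 2).add hsq
  have hmass := hf.tendsto_integral_comp_truncation hdiff (Φ := (· ^ 2)) (B := (· ^ 2))
    (by fun_prop) hsq fun p s h => by simpa using sq_le_sq.2 h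
  have hentropy := hf.tendsto_integral_comp_truncation hdiff
    (Φ := fun s => s ^ 2 * Real.log (s ^ 2)) (B := fun s => 2 * (s ^ 2 * |Real.log s|) + s ^ 2)
    (Real.continuous_mul_log.comp (continuous_pow 2)) hbound
    fun _ _ => abs_sq_mul_log_sq_le_of_abs_le
  have hmasslog := (Real.continuous_mul_log.tendsto (∫ ζ, f ζ ^ 2 ∂muDisc)).comp hmass
  refine le_of_tendsto_of_tendsto hentropy ((hmasslog.add_const _).sub (hmass.mul_const _)) ?_
  filter_upwards [self_mem_nhdsWithin] with ε hε
  exact hf.integral_truncation_mul_log_le hdiff hgrad hb hε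

end Truncation

section ConstantComparison

variable {v : ℝ}

lemma log_le_sub_inv_div_two (hv : 1 ≤ v) : Real.log v ≤ (v - v⁻¹) / 2 := by
  rw [← Real.sinh_log (by linarith)]
  exact Real.self_le_sinh_iff.2 (Real.log_nonneg hv)

lemma two_mul_sub_two_sub_div_sub_eq (hv : 1 < v) :
    2 * v - 2 - 2 * (v ^ 2 - 1) / (5 * v ^ 2 - 1)
        - (v ^ 2 - 1) * (3 * v ^ 2 - 1) / (2 * v ^ 2) / 2
      = (v - 1) ^ 2 * (8 - 8 * (v - 1) - 50 * (v - 1) ^ 2 - 50 * (v - 1) ^ 3 - 15 * (v - 1) ^ 4)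
          / (4 * v ^ 2 * (5 * v ^ 2 - 1)) := by
  have hden : v ^ 2 * 5 - 1 ≠ 0 := by nlinarith
  field_simp
  ring

lemma sub_one_div_sixteen_le_dampingGain (hv : 1 < v) (hv' : v ≤ 4 / 3) :
    (v - 1) / 16 ≤ dampingGain ((v ^ 2 - 1) * (3 * v ^ 2 - 1) / (2 * v ^ 2)) := by
  have hsq : v ^ 2 ≤ 16 / 9 := by nlinarith
  set b := (v ^ 2 - 1) * (3 * v ^ 2 - 1) / (2 * v ^ 2)
  have hb : 2 * (v - 1) ≤ b := by
    have hv0 : 0 < v := one_pos.trans hv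
    rw [le_div_iff₀ (by positivity)]
    nlinarith [mul_pos (sub_pos.2 hv) (sub_pos.2 hv), mul_pos (sub_pos.2 hv) hv0]
  have hb1 : b ≤ 1 := by
    rw [div_le_one (by positivity)]
    nlinarith [mul_nonneg (sub_nonneg.2 hsq) (sq_nonneg v)]
  have hb0 : 0 ≤ b := by linarith
  calc (v - 1) / 16 ≤ b / (8 * 2 ^ 2) := by linarith
    _ ≤ dampingGain b := by
        unfold dampingGain
        gcongr; linarith

lemma two_mul_sub_two_sub_div_le (hv : 1 < v) :
    2 * v - 2 - 2 * (v ^ 2 - 1) / (5 * v ^ 2 - 1)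
      ≤ (v ^ 2 - 1) * (3 * v ^ 2 - 1) / (2 * v ^ 2) / 2
        + dampingGain ((v ^ 2 - 1) * (3 * v ^ 2 - 1) / (2 * v ^ 2)) := by
  rw [← sub_le_iff_le_add', two_mul_sub_two_sub_div_sub_eq hv]
  have hsq : 1 < v ^ 2 := one_lt_pow₀ hv two_ne_zero
  have hden : 16 ≤ 4 * v ^ 2 * (5 * v ^ 2 - 1) := by nlinarith
  rcases le_or_gt v (4 / 3) with hv' | hv'
  · refine le_trans ?_ (sub_one_div_sixteen_le_dampingGain hv hv')
    set x := v - 1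
    have hx : 0 < x := sub_pos.2 hv
    have hcubic : x * (8 - 8 * x - 50 * x ^ 2) ≤ 1 := by
      nlinarith [mul_nonneg hx.le (sq_nonneg (x - 1 / 5)), sq_nonneg (x - 5 / 28)]
    rw [div_le_div_iff₀ (by linarith) (by norm_num)]
    have hx3 := pow_pos hx 3
    have hx4 := pow_pos hx 4
    nlinarith
  · have hgain : 0 ≤ dampingGain ((v ^ 2 - 1) * (3 * v ^ 2 - 1) / (2 * v ^ 2)) := by
      have hsq' : 0 ≤ 3 * v ^ 2 - 1 := by linarith
      unfold dampingGain
      positivity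
    refine le_trans (div_nonpos_of_nonpos_of_nonneg ?_ (by linarith)) hgain
    refine mul_nonpos_of_nonneg_of_nonpos (sq_nonneg _) ?_
    nlinarith [pow_pos (by linarith : 0 < v - 1) 3, pow_pos (by linarith : 0 < v - 1) 4]

lemma neg_two_mul_le_two_mul_log (hv : 1 < v) :
    -(2 * v) ≤ 2 * (v ^ 2 / (v ^ 2 - 1)) * Real.log (v ^ 2)⁻¹ := by
  have hden : 0 < v ^ 2 - 1 := by nlinarith
  rw [Real.log_inv, Real.log_pow]
  calc -(2 * v) = -(4 * (v ^ 2 / (v ^ 2 - 1)) * ((v - v⁻¹) / 2)) := by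
        field_simp
        ring
    _ ≤ -(4 * (v ^ 2 / (v ^ 2 - 1)) * Real.log v) := by
        gcongr
        exact log_le_sub_inv_div_two hv.le
    _ = _ := by
        push_cast
        ring

lemma two_mul_div_le_log (hv : 1 < v) :
    2 * (v ^ 2 - 1) / (5 * v ^ 2 - 1) ≤ Real.log (1 + (v ^ 2 - 1) / (2 * v ^ 2)) := by
  have hden : 0 < v ^ 2 - 1 := by nlinarith
  have hden' : 0 < 5 * v ^ 2 - 1 := by linarith
  convert Real.le_log_one_add_of_nonneg (by positivity : 0 ≤ (v ^ 2 - 1) / (2 * v ^ 2)) using 1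
  rw [div_eq_div_iff hden'.ne' (by positivity)]
  field_simp
  ring

/-- With `v = √(k / (k - 1))` every term is a rational function of `v` or controlled by one. -/
lemma neg_logSobolevConst_le {k : ℝ} (hk : 1 < k) :
    -logSobolevConst ((2 * k + 1) / (2 * (k * (k - 1))))
      ≤ 2 * k * Real.log ((k - 1) / k) + Real.log ((k - 1) / (2 * π)) := by
  have hk1 : 0 < k - 1 := sub_pos.2 hk
  obtain ⟨v, hv, hvk⟩ : ∃ v : ℝ, 1 < v ∧ v ^ 2 = k / (k - 1) :=
    ⟨√(k / (k - 1)), Real.lt_sqrt_of_sq_lt (by rw [one_pow, one_lt_div hk1]; linarith),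
      Real.sq_sqrt (by positivity)⟩
  have hlog := neg_two_mul_le_two_mul_log hv
  have hlog' := two_mul_div_le_log hv
  have hmain := two_mul_sub_two_sub_div_le hv
  have hsub : v ^ 2 - 1 = 1 / (k - 1) := by
    rw [hvk]
    field_simp
    ring
  have hb : (v ^ 2 - 1) * (3 * v ^ 2 - 1) / (2 * v ^ 2) = (2 * k + 1) / (2 * (k * (k - 1))) := by
    rw [hsub, hvk]
    field_simp
    ring
  have hk' : v ^ 2 / (v ^ 2 - 1) = k := by
    rw [hsub, hvk]
    field_simp
  have hhalf : Real.log (1 + (v ^ 2 - 1) / (2 * v ^ 2))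
      = Real.log ((k - 1) / (2 * π)) + Real.log (2 * π * ((2 * k + 1) / (2 * (k * (k - 1))))) := by
    rw [← Real.log_mul (by positivity) (by positivity), hsub, hvk]
    congr 1
    field_simp
  rw [hk', hvk, inv_div] at hlog
  rw [hb] at hmain
  unfold logSobolevConst
  linarith

end ConstantComparison

end HyperbolicLogSobolev

open HyperbolicLogSobolev in
theorem log_sobolev_family_hyperbolic_general (k : ℝ) (hk : 1 < k) (f : ℂ → ℝ)
    (hlim : VanishesAtBoundary f)
    (hdiff : ∀ ζ ∈ ball (0 : ℂ) 1, DifferentiableAt ℝ f ζ)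
    (hgrad : IntegrableOn (fun ζ => ‖fderiv ℝ f ζ‖ ^ 2) (ball 0 1))
    (hsq : Integrable (fun ζ => f ζ ^ 2) muDisc)
    (hlog : Integrable (fun ζ => f ζ ^ 2 * |Real.log (f ζ)|) muDisc) :
    ∫ ζ, f ζ ^ 2 * Real.log (f ζ ^ 2) ∂muDisc
      ≤ (∫ ζ, f ζ ^ 2 ∂muDisc) * Real.log (∫ ζ, f ζ ^ 2 ∂muDisc)
        + (∫ ζ, f ζ ^ 2 ∂muDisc)
            * (2 * k * Real.log ((k - 1) / k) + Real.log ((k - 1) / (2 * Real.pi)))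
        + (2 * k + 1) / (k * (k - 1)) * ∫ ζ in ball (0 : ℂ) 1, ‖fderiv ℝ f ζ‖ ^ 2 := by
  have hk1 : 0 < k - 1 := sub_pos.2 hk
  have hineq := hlim.integral_mul_log_le hdiff hgrad hsq hlog
    (b := (2 * k + 1) / (2 * (k * (k - 1)))) (by positivity)
  have hb : 2 * ((2 * k + 1) / (2 * (k * (k - 1)))) = (2 * k + 1) / (k * (k - 1)) := by
    field_simp
  rw [hb] at hineq
  have hconst := mul_le_mul_of_nonneg_left (neg_logSobolevConst_le hk)
    (integral_nonneg fun ζ => sq_nonneg (f ζ) : 0 ≤ ∫ ζ, f ζ ^ 2 ∂muDisc)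
  linarith

/-- A family of logarithmic Sobolev inequalities on the hyperbolic plane
(Theorem 4.1, inequality (3.9)): for `k > 1` and a bounded nonnegative `f` on the
disc vanishing at the boundary, differentiable with finite Dirichlet energy,
normalized by `∫ f² dμ = 1` and with `∫ f² |ln f| dμ < ∞`,
`∫ f² ln(f²) dμ ≤ 2k·ln((k−1)/k) + ln((k−1)/(2π)) + ((2k+1)/(k(k−1)))·∫ |∇f|² dA`. -/
theorem log_sobolev_family_hyperbolic
    (k : ℝ) (hk : 1 < k)
    (f : ℂ → ℝ)
    (hnn : ∀ ζ ∈ ball (0 : ℂ) 1, 0 ≤ f ζ)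
    (hbd : ∃ C, ∀ ζ ∈ ball (0 : ℂ) 1, f ζ ≤ C)
    (hlim : ∀ ε > 0, ∃ r < 1, ∀ ζ ∈ ball (0 : ℂ) 1, r < ‖ζ‖ → f ζ < ε)
    (hdiff : ∀ ζ ∈ ball (0 : ℂ) 1, DifferentiableAt ℝ f ζ)
    (hgrad : Integrable (fun ζ => ‖fderiv ℝ f ζ‖ ^ 2)
      (volume.restrict (ball (0 : ℂ) 1)))
    (hnorm : ∫ ζ, (f ζ) ^ 2 ∂muDisc = 1)
    (hlog : Integrable (fun ζ => (f ζ) ^ 2 * |Real.log (f ζ)|) muDisc) :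
    ∫ ζ, (f ζ) ^ 2 * Real.log ((f ζ) ^ 2) ∂muDisc
      ≤ 2 * k * Real.log ((k - 1) / k) + Real.log ((k - 1) / (2 * Real.pi))
        + (2 * k + 1) / (k * (k - 1)) *
            ∫ ζ in ball (0 : ℂ) 1, ‖fderiv ℝ f ζ‖ ^ 2 := by
  simpa [hnorm] using log_sobolev_family_hyperbolic_general k hk f
    (HyperbolicLogSobolev.vanishesAtBoundary_of_nonneg hnn hlim) hdiff hgrad
    (Integrable.of_integral_ne_zero (by simp [hnorm])) hlog
end

section
/- A one-parameter family of logarithmic Sobolev inequalities on the hyperbolic plane from Euclidean Sobolev inequalities (Theorem 4.2, inequality (3.12)): Let n ≥ 5 be an integer and set k̃ = (n−2)/2. Let g : H → [0,∞) be a smooth compactly supported function on the upper half-plane with ∫_H g² dμ = 1. Then ∫_H g² ln(g²) dμ ≤ k̃ · ln[ ((k̃−1)/(k̃+1))^{1+1/k̃} · ((2k̃+1)/(2π))^{1/k̃} · (1 + (1/(k̃(k̃−1))) ∫_H (|∂_t g|² + |∂_y g|²) dt dy)^{1+1/k̃} ]. -/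
open MeasureTheory

/-- The hyperbolic area measure `μ = y^{−2} dt dy` on the upper half-plane
`H = {(t,y) : y > 0}`. -/
noncomputable def muUpper : Measure (ℝ × ℝ) :=
  (volume.restrict {p : ℝ × ℝ | 0 < p.2}).withDensity
    (fun p => ENNReal.ofReal ((p.2 ^ 2)⁻¹))

/-!
In the coordinates `(t, s)` with height `e^s`, the substitution `u(t, s) = e^{-s/2} g(t, e^s)` turns
`L²(μ)` into `L²(dt ds)`, the Dirichlet energy `E` of `g` into `∫ e^{2s} u_t² + ∫ u_s² + 1/4`, and
the hyperbolic entropy into the Euclidean one plus `∫ s u²`.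

On the line, transporting a density to a Gaussian of variance `v` gives the sharp logarithmic
Sobolev inequality with parameter `v`. Use it with variance `v e^{2s}` on the horizontal line at
height `s`, where the factor `e^{2s}` produces both the weight of `u_t²` and the term `∫ s u²`, and
with variance `v` for the distribution of the mass of `u²` among the lines. The bounds add up to
`2v (E - 1/4) - log (2πv) - 2`, and the family of inequalities follows by choosing `v` in terms of
`k̃` and `E`.
-/

open Set Filter Topology Real

section Transport

theorem surjective_of_pos_le_deriv {G : ℝ → ℝ} (hG : Differentiable ℝ G) {c : ℝ} (hc : 0 < c)
    (hcG : ∀ x, c ≤ deriv G x) : Function.Surjective G := by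
  have growth : ∀ ⦃x y⦄, x ≤ y → c * (y - x) ≤ G y - G x :=
    mul_sub_le_image_sub_of_le_deriv hG hcG
  refine hG.continuous.surjective ?_ ?_
  · refine tendsto_atTop_mono' _ ?_
      (tendsto_atTop_add_const_right _ (G 0) (tendsto_id.const_mul_atTop hc))
    filter_upwards [eventually_ge_atTop 0] with x hx
    simpa [le_sub_iff_add_le] using growth hx
  · refine tendsto_atBot_mono' _ ?_
      (tendsto_atBot_add_const_right _ (G 0) (tendsto_id.const_mul_atBot hc))
    filter_upwards [eventually_le_atBot 0] with x hx
    have := growth hx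
    simp only [id_eq]
    linarith

theorem exists_orderIso_symm_eq_integral {w : ℝ → ℝ} (hw : Continuous w) {c : ℝ} (hc : 0 < c)
    (hcw : ∀ s, c ≤ w s) (a : ℝ) :
    ∃ S : ℝ ≃o ℝ, (∀ x, S.symm x = ∫ s in a..x, w s) ∧ ∀ v, HasDerivAt S (w (S v))⁻¹ v := by
  set G : ℝ → ℝ := fun x ↦ ∫ s in a..x, w s
  have hG : ∀ x, HasDerivAt G (w x) x := fun x ↦ (hw.integral_hasStrictDerivAt a x).hasDerivAt
  have hG_mono : StrictMono G :=
    strictMono_of_deriv_pos fun x ↦ by rw [(hG x).deriv]; exact hc.trans_le (hcw x)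
  have hG_surj : Function.Surjective G :=
    surjective_of_pos_le_deriv (fun x ↦ (hG x).differentiableAt) hc
      fun x ↦ by rw [(hG x).deriv]; exact hcw x
  let e := hG_mono.orderIsoOfSurjective G hG_surj
  refine ⟨e.symm, fun x ↦ rfl, fun v ↦ ?_⟩
  exact (hG (e.symm v)).of_local_left_inverse e.symm.continuous.continuousAt
    (hc.trans_le (hcw _)).ne' (.of_forall e.apply_symm_apply)

theorem hasDerivAt_setIntegral_Iic {f : ℝ → ℝ} (hf : Continuous f) (hfi : Integrable f) (x : ℝ) :
    HasDerivAt (fun y ↦ ∫ s in Iic y, f s) (f x) x := by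
  have split : (fun y ↦ ∫ s in Iic y, f s) = fun y ↦ (∫ s in Iic 0, f s) + ∫ s in 0..y, f s := by
    ext y
    rw [← intervalIntegral.integral_Iic_sub_Iic hfi.integrableOn hfi.integrableOn,
      add_sub_cancel]
  rw [split]
  exact ((hf.integral_hasStrictDerivAt 0 x).hasDerivAt).const_add _

/- If `F` is the primitive of `f` and `G` that of the Gaussian, the solution is `T = G⁻¹ ∘ (K F)`.
Bounding the Gaussian density below outside a large interval makes `G` onto, and `T` never leaves
that interval because `K ∫ f` is less than the Gaussian mass. -/
theorem exists_gaussian_transport {f : ℝ → ℝ} (hf : Continuous f) (hfi : Integrable f)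
    (hf0 : ∀ x, 0 ≤ f x) {K : ℝ} (hK0 : 0 ≤ K) (hK : K * ∫ x, f x < √(2 * π)) :
    ∃ T : ℝ → ℝ, ∀ x, HasDerivAt T (K * f x * exp (T x ^ 2 / 2)) x := by
  obtain ⟨R, hR, hKR⟩ :
      ∃ R : ℝ, 0 < R ∧ K * ∫ x, f x < ∫ s in (-R)..R, exp (-(1 / 2) * s ^ 2) := by
    have gauss_lim := intervalIntegral_tendsto_integral
      (integrable_exp_neg_mul_sq (b := 1 / 2) (by norm_num)) tendsto_neg_atTop_atBot tendsto_id
    rw [integral_gaussian, show π / (1 / 2) = 2 * π by ring] at gauss_lim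
    exact ((eventually_gt_atTop 0).and (gauss_lim.eventually_const_lt hK)).exists
  set w : ℝ → ℝ := fun s ↦ max (exp (-(1 / 2) * s ^ 2)) (exp (-(1 / 2) * R ^ 2))
  have hw : ∀ s ∈ Icc (-R) R, w s = exp (-(1 / 2) * s ^ 2) := fun s hs ↦
    max_eq_left (exp_le_exp.2 (by linarith [sq_le_sq' hs.1 hs.2]))
  obtain ⟨S, hS_symm, hS⟩ := exists_orderIso_symm_eq_integral (w := w) (by fun_prop)
    (exp_pos (-(1 / 2) * R ^ 2)) (fun _ ↦ le_max_right _ _) (-R)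
  set F : ℝ → ℝ := fun x ↦ ∫ s in Iic x, f s
  have hT_mem : ∀ x, S (K * F x) ∈ Icc (-R) R := fun x ↦ by
    have hF0 : 0 ≤ F x := integral_nonneg hf0
    have hF1 : F x ≤ ∫ x, f x := setIntegral_le_integral hfi (.of_forall hf0)
    have hGR : S.symm R = ∫ s in (-R)..R, exp (-(1 / 2) * s ^ 2) := by
      rw [hS_symm]
      exact intervalIntegral.integral_congr fun s hs ↦
        hw s (by rwa [uIcc_of_le (by linarith)] at hs)
    rw [mem_Icc, ← S.symm_apply_le, ← S.le_symm_apply, hGR, hS_symm, intervalIntegral.integral_same]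
    exact ⟨by positivity, (mul_le_mul_of_nonneg_left hF1 hK0).trans hKR.le⟩
  refine ⟨fun x ↦ S (K * F x), fun x ↦ ?_⟩
  refine ((hS (K * F x)).comp x
    ((hasDerivAt_setIntegral_Iic hf hfi x).const_mul K)).congr_deriv ?_
  rw [hw _ (hT_mem x), ← exp_neg, mul_comm]
  ring_nf

end Transport

section RealLine

theorem hasCompactSupport_of_hasDerivAt {f f' : ℝ → ℝ} (hs : HasCompactSupport f)
    (hf : ∀ x, HasDerivAt f (f' x) x) : HasCompactSupport f' :=
  (funext fun x ↦ (hf x).deriv : deriv f = f') ▸ hs.deriv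

theorem hasCompactSupport_sq {X : Type*} [TopologicalSpace X] {f : X → ℝ}
    (hs : HasCompactSupport f) : HasCompactSupport fun x ↦ f x ^ 2 :=
  hs.comp_left (g := (· ^ 2)) (by simp)

theorem hasDerivAt_sq {f : ℝ → ℝ} {f' x : ℝ} (hf : HasDerivAt f f' x) :
    HasDerivAt (fun y ↦ f y ^ 2) (2 * f x * f') x := by
  simpa using hf.fun_pow 2

theorem neg_le_add_of_sq_le_four_mul {a b p : ℝ} (ha : 0 ≤ a) (hb : 0 ≤ b)
    (h : p ^ 2 ≤ 4 * a * b) : -p ≤ a + b :=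
  neg_le_of_neg_le (abs_le_of_sq_le_sq' (by nlinarith [sq_nonneg (a - b)]) (by positivity)).1

theorem mul_log_le_of_sq_le {y p d K σ : ℝ} (hy : 0 ≤ y) (hd : 0 ≤ d) (hpd : p ^ 2 ≤ 4 * y * d)
    (hK : 0 < K) (hσ : 0 < σ) (t : ℝ) :
    y * log y ≤
      -(log (σ * K) + 1) * y + σ * (p * t + y * (K * y * exp (t ^ 2 / 2))) + 2 * σ ^ 2 * d := by
  have drift : -(σ * p * t) ≤ y * t ^ 2 / 2 + 2 * σ ^ 2 * d := by
    refine neg_le_add_of_sq_le_four_mul (by positivity) (by positivity) ?_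
    nlinarith [mul_le_mul_of_nonneg_right hpd (sq_nonneg (σ * t))]
  obtain rfl | hy := hy.eq_or_lt
  · simp only [mul_zero, zero_mul, zero_div, zero_add, add_zero] at drift ⊢
    linarith
  have log_tangent : log y ≤ -(log (σ * K) + 1) - t ^ 2 / 2 + σ * (K * y * exp (t ^ 2 / 2)) := by
    have h := log_le_sub_one_of_pos (show 0 < σ * K * y * exp (t ^ 2 / 2) by positivity)
    rw [log_mul (by positivity) (by positivity), log_mul (by positivity) hy.ne', log_exp] at h
    linarith
  linarith [mul_le_mul_of_nonneg_left log_tangent hy.le]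

variable {f f' D : ℝ → ℝ}

theorem integral_mul_log_le_of_transport (hf : ∀ x, HasDerivAt f (f' x) x) (hf' : Continuous f')
    (hs : HasCompactSupport f) (hf0 : ∀ x, 0 ≤ f x) (hD : Integrable D) (hD0 : ∀ x, 0 ≤ D x)
    (hfD : ∀ x, f' x ^ 2 ≤ 4 * f x * D x) {K σ : ℝ} (hK : 0 < K) (hσ : 0 < σ) {T : ℝ → ℝ}
    (hT : ∀ x, HasDerivAt T (K * f x * exp (T x ^ 2 / 2)) x) :
    ∫ x, f x * log (f x) ≤ -(log (σ * K) + 1) * (∫ x, f x) + 2 * σ ^ 2 * ∫ x, D x := by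
  have hfc : Continuous f := continuous_iff_continuousAt.2 fun x ↦ (hf x).continuousAt
  have hTc : Continuous T := continuous_iff_continuousAt.2 fun x ↦ (hT x).continuousAt
  have hs' : HasCompactSupport f' := hasCompactSupport_of_hasDerivAt hs hf
  set W : ℝ → ℝ := fun x ↦ f' x * T x + f x * (K * f x * exp (T x ^ 2 / 2))
  have hfi : Integrable f := hfc.integrable_of_hasCompactSupport hs
  have hWi : Integrable W := Continuous.integrable_of_hasCompactSupport (by fun_prop)
    (hs'.mul_right.add hs.mul_right)
  have hW : ∫ x, W x = 0 :=
    integral_eq_zero_of_hasDerivAt_of_integrable (fun x ↦ (hf x).mul (hT x)) hWi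
      ((hfc.mul hTc).integrable_of_hasCompactSupport hs.mul_right)
  have hfl : Integrable fun x ↦ f x * log (f x) :=
    (continuous_mul_log.comp hfc).integrable_of_hasCompactSupport hs.mul_right
  have hrhs := ((hfi.const_mul (-(log (σ * K) + 1))).add (hWi.const_mul σ)).add
    (hD.const_mul (2 * σ ^ 2))
  calc ∫ x, f x * log (f x)
      ≤ ∫ x, -(log (σ * K) + 1) * f x + σ * W x + 2 * σ ^ 2 * D x :=
        integral_mono hfl hrhs fun x ↦
          mul_log_le_of_sq_le (hf0 x) (hD0 x) (hfD x) hK hσ (T x)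
    _ = -(log (σ * K) + 1) * (∫ x, f x) + 2 * σ ^ 2 * ∫ x, D x := by
        rw [integral_add ((hfi.const_mul _).fun_add (hWi.const_mul _)) (hD.const_mul _),
          integral_add (hfi.const_mul _) (hWi.const_mul _), integral_const_mul,
          integral_const_mul, integral_const_mul, hW, mul_zero, add_zero]

/- The parameter `v` is the variance of the Gaussian `f`, with `D = ((√f)')²`, that attains
equality. -/
theorem integral_mul_log_le (hf : ∀ x, HasDerivAt f (f' x) x) (hf' : Continuous f')
    (hs : HasCompactSupport f) (hf0 : ∀ x, 0 ≤ f x) (hD : Integrable D) (hD0 : ∀ x, 0 ≤ D x)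
    (hfD : ∀ x, f' x ^ 2 ≤ 4 * f x * D x) {v : ℝ} (hv : 0 < v) :
    ∫ x, f x * log (f x) ≤
      (∫ x, f x) * log (∫ x, f x) - (log (2 * π * v) / 2 + 1) * (∫ x, f x) + 2 * v * ∫ x, D x := by
  have hfc : Continuous f := continuous_iff_continuousAt.2 fun x ↦ (hf x).continuousAt
  have hfi : Integrable f := hfc.integrable_of_hasCompactSupport hs
  set m := ∫ x, f x
  obtain hm | hm : 0 = m ∨ 0 < m := (integral_nonneg hf0).eq_or_lt
  · have hf_ae : f =ᵐ[volume] 0 := (integral_eq_zero_iff_of_nonneg hf0 hfi).1 hm.symm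
    have entropy_zero : ∫ x, f x * log (f x) = 0 :=
      integral_eq_zero_of_ae (hf_ae.mono fun x hx ↦ by simp [hx])
    have : 0 ≤ ∫ x, D x := integral_nonneg hD0
    rw [entropy_zero, ← hm]
    simp only [zero_mul, mul_zero, sub_zero, zero_add]
    positivity
  have hK₀ : 0 < √(2 * π) / m := by positivity
  have subcritical : ∀ᶠ K in 𝓝[<] (√(2 * π) / m),
      ∫ x, f x * log (f x) ≤ -(log (√v * K) + 1) * m + 2 * √v ^ 2 * ∫ x, D x := by
    filter_upwards [self_mem_nhdsWithin, nhdsWithin_le_nhds (eventually_gt_nhds hK₀)] with K hKm hK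
    obtain ⟨T, hT⟩ := exists_gaussian_transport hfc hfi hf0 hK.le ((lt_div_iff₀ hm).1 hKm)
    exact integral_mul_log_le_of_transport hf hf' hs hf0 hD hD0 hfD hK (sqrt_pos.2 hv) hT
  have critical : ContinuousAt
      (fun K ↦ -(log (√v * K) + 1) * m + 2 * √v ^ 2 * ∫ x, D x) (√(2 * π) / m) := by
    have : √v * (√(2 * π) / m) ≠ 0 := by positivity
    fun_prop (disch := assumption)
  refine (ge_of_tendsto (critical.tendsto.mono_left nhdsWithin_le_nhds) subcritical).trans_eq ?_
  rw [sq_sqrt hv.le, ← mul_div_assoc, ← sqrt_mul hv.le, log_div (by positivity) hm.ne',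
    log_sqrt (by positivity), mul_comm v]
  ring

theorem integral_sq_mul_log_sq_le (hf : ∀ x, HasDerivAt f (f' x) x) (hf' : Continuous f')
    (hs : HasCompactSupport f) {v : ℝ} (hv : 0 < v) :
    ∫ x, f x ^ 2 * log (f x ^ 2) ≤
      (∫ x, f x ^ 2) * log (∫ x, f x ^ 2) - (log (2 * π * v) / 2 + 1) * (∫ x, f x ^ 2)
        + 2 * v * ∫ x, f' x ^ 2 := by
  have hfc : Continuous f := continuous_iff_continuousAt.2 fun x ↦ (hf x).continuousAt
  have hs' : HasCompactSupport f' := hasCompactSupport_of_hasDerivAt hs hf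
  exact integral_mul_log_le (D := fun x ↦ f' x ^ 2) (fun x ↦ hasDerivAt_sq (hf x)) (by fun_prop)
    (hasCompactSupport_sq hs) (fun x ↦ sq_nonneg (f x))
    ((hf'.pow 2).integrable_of_hasCompactSupport (hasCompactSupport_sq hs'))
    (fun x ↦ sq_nonneg (f' x)) (fun x ↦ le_of_eq (by ring)) hv

end RealLine

section CompactlySupportedOnProduct

variable {X Y E : Type*} [TopologicalSpace X] [TopologicalSpace Y] {F : X × Y → E}

theorem eq_zero_of_notMem_image_fst [Zero E] {x : X} (hx : x ∉ Prod.fst '' tsupport F) (y : Y) :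
    F (x, y) = 0 :=
  image_eq_zero_of_notMem_tsupport fun h ↦ hx ⟨_, h, rfl⟩

theorem hasCompactSupport_slice [R1Space X] [Zero E] (hs : HasCompactSupport F) (y : Y) :
    HasCompactSupport fun x ↦ F (x, y) :=
  .intro (hs.image continuous_fst) fun _ hx ↦ eq_zero_of_notMem_image_fst hx y

variable [NormedAddCommGroup E] [MeasurableSpace X] {μ : Measure X}

theorem integrable_slice [OpensMeasurableSpace X] [IsFiniteMeasureOnCompacts μ] [R1Space X]
    (hF : Continuous F) (hs : HasCompactSupport F) (y : Y) :
    Integrable (fun x ↦ F (x, y)) μ :=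
  Continuous.integrable_of_hasCompactSupport (by fun_prop) (hasCompactSupport_slice hs y)

variable [NormedSpace ℝ E]

theorem hasCompactSupport_integral_slice [R1Space Y] (hs : HasCompactSupport F) :
    HasCompactSupport fun y ↦ ∫ x, F (x, y) ∂μ :=
  .intro (hs.image continuous_snd) fun y hy ↦ by
    have slice_zero : ∀ x, F (x, y) = 0 := fun x ↦
      image_eq_zero_of_notMem_tsupport fun h ↦ hy ⟨_, h, rfl⟩
    simp [slice_zero]

variable [OpensMeasurableSpace X] [IsFiniteMeasureOnCompacts μ]

theorem continuous_integral_slice (hF : Continuous F) (hs : HasCompactSupport F) :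
    Continuous fun y ↦ ∫ x, F (x, y) ∂μ := by
  rw [← continuousOn_univ]
  exact continuousOn_integral_of_compact_support (f := fun y x ↦ F (x, y))
    (hs.image continuous_fst) (by fun_prop) fun y x _ hx ↦ eq_zero_of_notMem_image_fst hx y

theorem hasDerivAt_integral_slice [T2Space X] {F F' : X × ℝ → E} (hF : Continuous F)
    (hs : HasCompactSupport F) (hF' : Continuous F') (hs' : HasCompactSupport F')
    (hd : ∀ x y, HasDerivAt (fun y ↦ F (x, y)) (F' (x, y)) y) (y : ℝ) :
    HasDerivAt (fun y ↦ ∫ x, F (x, y) ∂μ) (∫ x, F' (x, y) ∂μ) y := by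
  obtain ⟨C, hC⟩ := hs'.exists_bound_of_continuous hF'
  have hK : IsCompact (Prod.fst '' tsupport F') := hs'.image continuous_fst
  refine (hasDerivAt_integral_of_dominated_loc_of_deriv_le (F := fun y x ↦ F (x, y))
    (F' := fun y x ↦ F' (x, y)) (bound := (Prod.fst '' tsupport F').indicator fun _ ↦ C)
    univ_mem (.of_forall fun z ↦ (integrable_slice hF hs z).aestronglyMeasurable)
    (integrable_slice hF hs y) (integrable_slice hF' hs' y).aestronglyMeasurable
    (.of_forall fun x z _ ↦ ?_) ?_ (.of_forall fun x z _ ↦ hd x z)).2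
  · by_cases hx : x ∈ Prod.fst '' tsupport F'
    · simpa only [indicator_of_mem hx] using hC (x, z)
    · rw [indicator_of_notMem hx, eq_zero_of_notMem_image_fst hx z, norm_zero]
  · exact (integrable_indicator_iff hK.measurableSet).2 (integrableOn_const hK.measure_ne_top)

end CompactlySupportedOnProduct

theorem sq_integral_mul_le {α : Type*} [MeasurableSpace α] {μ : Measure α} {a b : α → ℝ}
    (ha : MemLp a 2 μ) (hb : MemLp b 2 μ) :
    (∫ x, a x * b x ∂μ) ^ 2 ≤ (∫ x, a x ^ 2 ∂μ) * ∫ x, b x ^ 2 ∂μ := by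
  have inner_toLp : ∀ {f g : α → ℝ} (hf : MemLp f 2 μ) (hg : MemLp g 2 μ),
      inner ℝ (hf.toLp f) (hg.toLp g) = ∫ x, f x * g x ∂μ := fun hf hg ↦ by
    rw [L2.inner_def]
    refine integral_congr_ae ?_
    filter_upwards [hf.coeFn_toLp, hg.coeFn_toLp] with x hfx hgx
    rw [hfx, hgx, real_inner_comm, RCLike.inner_apply, conj_trivial]
  have cauchy_schwarz := real_inner_mul_inner_self_le (ha.toLp a) (hb.toLp b)
  simpa only [inner_toLp, ← sq] using cauchy_schwarz

section PartialDerivatives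

theorem continuous_fderiv_apply_const {𝕜 E F : Type*} [NontriviallyNormedField 𝕜]
    [NormedAddCommGroup E] [NormedSpace 𝕜 E] [NormedAddCommGroup F] [NormedSpace 𝕜 F] {f : E → F}
    (hf : ContDiff 𝕜 1 f) (v : E) : Continuous fun x ↦ fderiv 𝕜 f x v :=
  (hf.continuous_fderiv one_ne_zero).clm_apply continuous_const

variable {u : ℝ × ℝ → ℝ}

theorem hasDerivAt_slice_fst (hu : Differentiable ℝ u) (t s : ℝ) :
    HasDerivAt (fun t ↦ u (t, s)) (fderiv ℝ u (t, s) (1, 0)) t :=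
  (hu (t, s)).hasFDerivAt.comp_hasDerivAt t ((hasDerivAt_id t).prodMk (hasDerivAt_const t s))

theorem hasDerivAt_slice_snd (hu : Differentiable ℝ u) (t s : ℝ) :
    HasDerivAt (fun s ↦ u (t, s)) (fderiv ℝ u (t, s) (0, 1)) s :=
  (hu (t, s)).hasFDerivAt.comp_hasDerivAt s ((hasDerivAt_const s t).prodMk (hasDerivAt_id s))

end PartialDerivatives

section Plane

/-- The mass that the density `u ^ 2` on the plane gives to the horizontal line at height `s`.
Applied to a partial derivative of `u`, it gives a Dirichlet energy on that line. -/
noncomputable def sliceMass (u : ℝ × ℝ → ℝ) (s : ℝ) : ℝ := ∫ t, u (t, s) ^ 2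

variable {u : ℝ × ℝ → ℝ}

theorem sliceMass_nonneg (u : ℝ × ℝ → ℝ) (s : ℝ) : 0 ≤ sliceMass u s :=
  integral_nonneg fun _ ↦ sq_nonneg _

theorem continuous_sliceMass (hu : Continuous u) (hs : HasCompactSupport u) :
    Continuous (sliceMass u) :=
  continuous_integral_slice (hu.pow 2) (hasCompactSupport_sq hs)

theorem hasCompactSupport_sliceMass (hs : HasCompactSupport u) :
    HasCompactSupport (sliceMass u) :=
  hasCompactSupport_integral_slice (hasCompactSupport_sq hs)

theorem integrable_mul_sliceMass {φ : ℝ → ℝ} (hφ : Continuous φ) (hu : Continuous u)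
    (hs : HasCompactSupport u) : Integrable fun s ↦ φ s * sliceMass u s :=
  (hφ.mul (continuous_sliceMass hu hs)).integrable_of_hasCompactSupport
    (hasCompactSupport_sliceMass hs).mul_left

theorem integrable_mul_sq {φ : ℝ × ℝ → ℝ} (hφ : Continuous φ) (hu : Continuous u)
    (hs : HasCompactSupport u) : Integrable fun z ↦ φ z * u z ^ 2 :=
  (hφ.mul (hu.pow 2)).integrable_of_hasCompactSupport (hasCompactSupport_sq hs).mul_left

theorem integral_mul_sliceMass {φ : ℝ → ℝ} (hφ : Continuous φ) (hu : Continuous u)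
    (hs : HasCompactSupport u) : ∫ s, φ s * sliceMass u s = ∫ z, φ z.2 * u z ^ 2 := by
  have hint : Integrable fun z : ℝ × ℝ ↦ φ z.2 * u z ^ 2 := integrable_mul_sq (by fun_prop) hu hs
  rw [Measure.volume_eq_prod, integral_prod_symm _ hint]
  simp only [integral_const_mul, sliceMass]

theorem integral_sliceMass (hu : Continuous u) (hs : HasCompactSupport u) :
    ∫ s, sliceMass u s = ∫ z, u z ^ 2 := by
  simpa only [one_mul] using integral_mul_sliceMass (φ := fun _ ↦ 1) continuous_const hu hs

theorem hasDerivAt_sliceMass (hu : ContDiff ℝ 1 u) (hs : HasCompactSupport u) (s : ℝ) :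
    HasDerivAt (sliceMass u) (∫ t, 2 * u (t, s) * fderiv ℝ u (t, s) (0, 1)) s := by
  have hu' := continuous_fderiv_apply_const hu (0, 1)
  exact hasDerivAt_integral_slice (F := fun z ↦ u z ^ 2)
    (F' := fun z ↦ 2 * u z * fderiv ℝ u z (0, 1)) (hu.continuous.pow 2) (hasCompactSupport_sq hs)
    ((hu.continuous.const_mul 2).mul hu') (hs.fderiv_apply (𝕜 := ℝ) (0, 1)).mul_left
    (fun t s ↦ hasDerivAt_sq (hasDerivAt_slice_snd (hu.differentiable one_ne_zero) t s)) s

theorem sq_deriv_sliceMass_le (hu : ContDiff ℝ 1 u) (hs : HasCompactSupport u) (s : ℝ) :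
    (∫ t, 2 * u (t, s) * fderiv ℝ u (t, s) (0, 1)) ^ 2 ≤
      4 * sliceMass u s * sliceMass (fun z ↦ fderiv ℝ u z (0, 1)) s := by
  have hu' := continuous_fderiv_apply_const hu (0, 1)
  have slice_memLp : ∀ {f : ℝ × ℝ → ℝ}, Continuous f → HasCompactSupport f →
      MemLp (fun t ↦ f (t, s)) 2 := fun hf hfs ↦
    Continuous.memLp_of_hasCompactSupport (by fun_prop) (hasCompactSupport_slice hfs s)
  have cauchy_schwarz := sq_integral_mul_le (slice_memLp hu.continuous hs)
    (slice_memLp hu' (hs.fderiv_apply (𝕜 := ℝ) (0, 1)))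
  simp only [mul_assoc, integral_const_mul, sliceMass]
  linarith

theorem integral_sliceMass_mul_log_le (hu : ContDiff ℝ 1 u) (hs : HasCompactSupport u) {v : ℝ}
    (hv : 0 < v) :
    ∫ s, sliceMass u s * log (sliceMass u s) ≤
      (∫ z, u z ^ 2) * log (∫ z, u z ^ 2) - (log (2 * π * v) / 2 + 1) * (∫ z, u z ^ 2)
        + 2 * v * ∫ z, fderiv ℝ u z (0, 1) ^ 2 := by
  have hu_cont := hu.continuous
  have hu' := continuous_fderiv_apply_const hu (0, 1)
  have hs' := hs.fderiv_apply (𝕜 := ℝ) (0, 1)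
  have hm' : Continuous fun s ↦ ∫ t, 2 * u (t, s) * fderiv ℝ u (t, s) (0, 1) :=
    continuous_integral_slice (F := fun z ↦ 2 * u z * fderiv ℝ u z (0, 1)) (by fun_prop)
      hs'.mul_left
  rw [← integral_sliceMass hu_cont hs, ← integral_sliceMass hu' hs']
  exact integral_mul_log_le (hasDerivAt_sliceMass hu hs) hm' (hasCompactSupport_sliceMass hs)
    (sliceMass_nonneg u)
    ((continuous_sliceMass hu' hs').integrable_of_hasCompactSupport
      (hasCompactSupport_sliceMass hs'))
    (sliceMass_nonneg _) (sq_deriv_sliceMass_le hu hs) hv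

theorem integral_slice_sq_mul_log_sq_le (hu : ContDiff ℝ 1 u) (hs : HasCompactSupport u) {v : ℝ}
    (hv : 0 < v) (a s : ℝ) :
    (∫ t, u (t, s) ^ 2 * log (u (t, s) ^ 2)) + (log (2 * π * v) / 2 + 1) * sliceMass u s
        + a * sliceMass u s ≤
      sliceMass u s * log (sliceMass u s)
        + 2 * v * (exp (2 * a) * sliceMass (fun z ↦ fderiv ℝ u z (1, 0)) s) := by
  have hu' := continuous_fderiv_apply_const hu (1, 0)
  have log_variance : log (2 * π * (v * exp (2 * a))) = log (2 * π * v) + 2 * a := by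
    rw [← mul_assoc, log_mul (by positivity) (exp_pos _).ne', log_exp]
  have line := integral_sq_mul_log_sq_le
    (fun t ↦ hasDerivAt_slice_fst (hu.differentiable one_ne_zero) t s)
    (hu'.comp (Continuous.prodMk_left s))
    (hasCompactSupport_slice hs s) (mul_pos hv (exp_pos (2 * a)))
  rw [log_variance] at line
  simp only [sliceMass]
  linarith

theorem integral_sq_mul_log_sq_le_sliceMass (hu : ContDiff ℝ 1 u) (hs : HasCompactSupport u)
    {φ : ℝ → ℝ} (hφ : Continuous φ) {v : ℝ} (hv : 0 < v) :
    (∫ z, u z ^ 2 * log (u z ^ 2)) + (log (2 * π * v) / 2 + 1) * (∫ z, u z ^ 2)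
        + ∫ z, φ z.2 * u z ^ 2 ≤
      (∫ s, sliceMass u s * log (sliceMass u s))
        + 2 * v * ∫ z, exp (2 * φ z.2) * fderiv ℝ u z (1, 0) ^ 2 := by
  have hu_cont := hu.continuous
  have hu' := continuous_fderiv_apply_const hu (1, 0)
  have hs' := hs.fderiv_apply (𝕜 := ℝ) (1, 0)
  have hm := continuous_sliceMass hu_cont hs
  have hms := hasCompactSupport_sliceMass hs
  have hexp : Continuous fun s ↦ exp (2 * φ s) := by fun_prop
  have entropy_int : Integrable fun z ↦ u z ^ 2 * log (u z ^ 2) :=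
    (continuous_mul_log.comp (hu_cont.pow 2)).integrable_of_hasCompactSupport
      (hasCompactSupport_sq hs).mul_right
  have mass_int := integrable_mul_sliceMass (continuous_const (y := log (2 * π * v) / 2 + 1))
    hu_cont hs
  have potential_int := integrable_mul_sliceMass hφ hu_cont hs
  have marginal_int : Integrable fun s ↦ sliceMass u s * log (sliceMass u s) :=
    (continuous_mul_log.comp hm).integrable_of_hasCompactSupport hms.mul_right
  have energy_int := (integrable_mul_sliceMass hexp hu' hs').const_mul (2 * v)
  rw [← integral_sliceMass hu_cont hs, ← integral_mul_sliceMass hφ hu_cont hs,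
    ← integral_mul_sliceMass hexp hu' hs', ← integral_const_mul, ← integral_const_mul,
    Measure.volume_eq_prod, integral_prod_symm _ entropy_int,
    ← integral_add entropy_int.integral_prod_right mass_int,
    ← integral_add (entropy_int.integral_prod_right.fun_add mass_int) potential_int,
    ← integral_add marginal_int energy_int]
  exact integral_mono ((entropy_int.integral_prod_right.fun_add mass_int).fun_add potential_int)
    (marginal_int.fun_add energy_int) fun s ↦ integral_slice_sq_mul_log_sq_le hu hs hv (φ s) s

theorem log_sobolev_plane (hu : ContDiff ℝ 1 u) (hs : HasCompactSupport u)
    (hnorm : ∫ z, u z ^ 2 = 1) {φ : ℝ → ℝ} (hφ : Continuous φ) {v : ℝ} (hv : 0 < v) :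
    (∫ z, u z ^ 2 * log (u z ^ 2)) + ∫ z, φ z.2 * u z ^ 2 ≤
      2 * v * ((∫ z, exp (2 * φ z.2) * fderiv ℝ u z (1, 0) ^ 2) + ∫ z, fderiv ℝ u z (0, 1) ^ 2)
        - log (2 * π * v) - 2 := by
  have slices := integral_sq_mul_log_sq_le_sliceMass hu hs hφ hv
  have marginal := integral_sliceMass_mul_log_le hu hs hv
  rw [hnorm] at slices marginal
  rw [log_one] at marginal
  linarith

theorem integral_mul_fderiv_self_eq_zero {E : Type*} [NormedAddCommGroup E] [NormedSpace ℝ E]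
    [FiniteDimensional ℝ E] [MeasurableSpace E] [BorelSpace E] {μ : Measure E} [μ.IsAddHaarMeasure]
    {f : E → ℝ} (hf : ContDiff ℝ 1 f) (hs : HasCompactSupport f) (v : E) :
    ∫ x, f x * fderiv ℝ f x v ∂μ = 0 := by
  have hf' := continuous_fderiv_apply_const hf v
  have hff' : Integrable (fun x ↦ f x * fderiv ℝ f x v) μ :=
    (hf.continuous.mul hf').integrable_of_hasCompactSupport hs.mul_right
  have parts := integral_mul_fderiv_eq_neg_fderiv_mul_of_integrable (𝕜 := ℝ) (μ := μ) (v := v)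
    (by simpa only [mul_comm] using hff') hff'
    ((hf.continuous.mul hf.continuous).integrable_of_hasCompactSupport hs.mul_right)
    (fun x _ ↦ hf.differentiable one_ne_zero x) (fun x _ ↦ hf.differentiable one_ne_zero x)
  simp only [mul_comm (fderiv ℝ f _ v)] at parts
  linarith

end Plane

section LogHeight

/-- The upper half-plane in horocyclic coordinates `(t, s)`, where `s` is the logarithm of the
height. -/
noncomputable def horoChart : ℝ × ℝ → ℝ × ℝ := Prod.map id exp

theorem contDiff_horoChart {n : WithTop ℕ∞} : ContDiff ℝ n horoChart :=
  contDiff_id.prodMap contDiff_exp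

theorem injective_horoChart : Function.Injective horoChart :=
  Function.injective_id.prodMap exp_injective

theorem range_horoChart : range horoChart = {p : ℝ × ℝ | 0 < p.2} := by
  ext p
  simp [horoChart, range_prodMap]

theorem hasFDerivAt_horoChart (z : ℝ × ℝ) : HasFDerivAt horoChart
    ((ContinuousLinearMap.id ℝ ℝ).prodMap (exp z.2 • ContinuousLinearMap.id ℝ ℝ)) z :=
  (hasFDerivAt_id z.1).prodMap z (hasFDerivAt_id z.2).exp

theorem hasCompactSupport_comp_horoChart {Z : Type*} [Zero Z] {g : ℝ × ℝ → Z}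
    (hs : HasCompactSupport g) (hsH : tsupport g ⊆ {p : ℝ × ℝ | 0 < p.2}) :
    HasCompactSupport (g ∘ horoChart) := by
  have log_continuousOn : ContinuousOn (fun p : ℝ × ℝ ↦ (p.1, log p.2)) (tsupport g) :=
    continuousOn_fst.prodMk (continuousOn_snd.log fun p hp ↦ (hsH hp).ne')
  refine .intro (hs.isCompact.image_of_continuousOn log_continuousOn) fun z hz ↦ ?_
  exact image_eq_zero_of_notMem_tsupport (f := g) fun h ↦
    hz ⟨horoChart z, h, by simp [horoChart]⟩

variable {E : Type*} [NormedAddCommGroup E] [NormedSpace ℝ E]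

theorem setIntegral_snd_pos_eq_integral_horoChart (F : ℝ × ℝ → E) :
    ∫ p in {p : ℝ × ℝ | 0 < p.2}, F p = ∫ z : ℝ × ℝ, exp z.2 • F (horoChart z) := by
  have det_eq (z : ℝ × ℝ) : ((ContinuousLinearMap.id ℝ ℝ).prodMap
      (exp z.2 • ContinuousLinearMap.id ℝ ℝ)).det = exp z.2 := by
    simp [ContinuousLinearMap.det, LinearMap.det_prodMap]
  rw [← range_horoChart, ← image_univ, integral_image_eq_integral_abs_det_fderiv_smul volume .univ
    (fun z _ ↦ (hasFDerivAt_horoChart z).hasFDerivWithinAt) injective_horoChart.injOn,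
    setIntegral_univ]
  simp only [det_eq, abs_exp]

theorem integral_muUpper (F : ℝ × ℝ → E) :
    ∫ p, F p ∂muUpper = ∫ z : ℝ × ℝ, exp (-z.2) • F (horoChart z) := by
  rw [muUpper, integral_withDensity_eq_integral_toReal_smul (by fun_prop)
    (.of_forall fun _ ↦ ENNReal.ofReal_lt_top), setIntegral_snd_pos_eq_integral_horoChart]
  refine integral_congr_ae (.of_forall fun z ↦ ?_)
  simp only [horoChart, Prod.map_snd, smul_smul]
  congr 1
  rw [ENNReal.toReal_ofReal (by positivity), exp_neg]
  field_simp

end LogHeight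

section HoroLift

/-- The function `u(t, s) = e^{-s/2} g(t, e^s)`, normalized so that `g ↦ u` carries the norm of
`L²(μ)` to that of `L²(dt ds)`. -/
noncomputable def horoLift (g : ℝ × ℝ → ℝ) (z : ℝ × ℝ) : ℝ := exp (-z.2 / 2) * g (horoChart z)

theorem sq_horoLift (g : ℝ × ℝ → ℝ) (z : ℝ × ℝ) :
    horoLift g z ^ 2 = exp (-z.2) * g (horoChart z) ^ 2 := by
  rw [horoLift, mul_pow, ← exp_nat_mul, Nat.cast_ofNat, mul_div_cancel₀ _ two_ne_zero]

theorem sq_mul_log_sq_horoChart (g : ℝ × ℝ → ℝ) (z : ℝ × ℝ) :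
    exp (-z.2) * (g (horoChart z) ^ 2 * log (g (horoChart z) ^ 2)) =
      horoLift g z ^ 2 * log (horoLift g z ^ 2) + z.2 * horoLift g z ^ 2 := by
  rw [sq_horoLift]
  obtain hz | hz := eq_or_ne (g (horoChart z)) 0
  · simp [hz]
  · rw [log_mul (exp_pos _).ne' (pow_ne_zero 2 hz), log_exp]
    ring

theorem integral_sq_horoLift (g : ℝ × ℝ → ℝ) : ∫ z, horoLift g z ^ 2 = ∫ p, g p ^ 2 ∂muUpper := by
  simp only [integral_muUpper, smul_eq_mul, sq_horoLift]

variable {g : ℝ × ℝ → ℝ}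

theorem contDiff_horoLift {n : WithTop ℕ∞} (hg : ContDiff ℝ n g) : ContDiff ℝ n (horoLift g) :=
  ContDiff.mul (by fun_prop) (hg.comp contDiff_horoChart)

theorem hasCompactSupport_horoLift (hs : HasCompactSupport g)
    (hsH : tsupport g ⊆ {p : ℝ × ℝ | 0 < p.2}) : HasCompactSupport (horoLift g) :=
  (hasCompactSupport_comp_horoChart hs hsH).mul_left

theorem fderiv_horoLift_fst (hg : ContDiff ℝ 1 g) (z : ℝ × ℝ) :
    fderiv ℝ (horoLift g) z (1, 0) = exp (-z.2 / 2) * fderiv ℝ g (horoChart z) (1, 0) :=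
  (hasDerivAt_slice_fst ((contDiff_horoLift hg).differentiable one_ne_zero) z.1 z.2).unique
    ((hasDerivAt_slice_fst (hg.differentiable one_ne_zero) z.1 (exp z.2)).const_mul
      (exp (-z.2 / 2)))

theorem fderiv_horoLift_snd (hg : ContDiff ℝ 1 g) (z : ℝ × ℝ) :
    fderiv ℝ (horoLift g) z (0, 1) =
      exp (-z.2 / 2) * (exp z.2 * fderiv ℝ g (horoChart z) (0, 1) - g (horoChart z) / 2) := by
  have weight := ((hasDerivAt_id z.2).fun_neg.div_const 2).exp
  have vertical :=
    (hasDerivAt_slice_snd (hg.differentiable one_ne_zero) z.1 (exp z.2)).comp z.2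
      (hasDerivAt_exp z.2)
  rw [(hasDerivAt_slice_snd ((contDiff_horoLift hg).differentiable one_ne_zero) z.1 z.2).unique
    (weight.fun_mul vertical)]
  simp only [horoChart, Prod.map, id_eq]
  ring

theorem energy_density_horoChart (hg : ContDiff ℝ 1 g) (z : ℝ × ℝ) :
    exp z.2 * (fderiv ℝ g (horoChart z) (1, 0) ^ 2 + fderiv ℝ g (horoChart z) (0, 1) ^ 2) =
      exp (2 * z.2) * fderiv ℝ (horoLift g) z (1, 0) ^ 2 + fderiv ℝ (horoLift g) z (0, 1) ^ 2
        + horoLift g z * fderiv ℝ (horoLift g) z (0, 1) + 1 / 4 * horoLift g z ^ 2 := by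
  have exp_cancel : exp (-z.2 / 2) ^ 2 * exp z.2 = 1 := by
    rw [← exp_nat_mul, ← exp_add, exp_eq_one_iff]
    push_cast
    ring
  rw [fderiv_horoLift_fst hg, fderiv_horoLift_snd hg, horoLift, two_mul z.2, exp_add]
  linear_combination (-(exp z.2 * (fderiv ℝ g (horoChart z) (1, 0) ^ 2
    + fderiv ℝ g (horoChart z) (0, 1) ^ 2))) * exp_cancel

theorem integral_sq_mul_log_sq_muUpper (hg : Continuous g) (hs : HasCompactSupport g)
    (hsH : tsupport g ⊆ {p : ℝ × ℝ | 0 < p.2}) :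
    ∫ p, g p ^ 2 * log (g p ^ 2) ∂muUpper =
      (∫ z, horoLift g z ^ 2 * log (horoLift g z ^ 2)) + ∫ z, z.2 * horoLift g z ^ 2 := by
  have hu : Continuous (horoLift g) := (contDiff_horoLift (contDiff_zero.2 hg)).continuous
  have hus := hasCompactSupport_horoLift hs hsH
  simp only [integral_muUpper, smul_eq_mul, sq_mul_log_sq_horoChart]
  exact integral_add ((continuous_mul_log.comp (hu.pow 2)).integrable_of_hasCompactSupport
    (hasCompactSupport_sq hus).mul_right) (integrable_mul_sq continuous_snd hu hus)

theorem dirichlet_eq_integral_horoLift (hg : ContDiff ℝ 1 g) (hs : HasCompactSupport g)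
    (hsH : tsupport g ⊆ {p : ℝ × ℝ | 0 < p.2}) :
    ∫ p in {p : ℝ × ℝ | 0 < p.2}, fderiv ℝ g p (1, 0) ^ 2 + fderiv ℝ g p (0, 1) ^ 2 =
      (∫ z, exp (2 * z.2) * fderiv ℝ (horoLift g) z (1, 0) ^ 2)
        + (∫ z, fderiv ℝ (horoLift g) z (0, 1) ^ 2) + 1 / 4 * ∫ z, horoLift g z ^ 2 := by
  have hu := contDiff_horoLift hg
  have hus := hasCompactSupport_horoLift hs hsH
  have hus' := hus.fderiv_apply (𝕜 := ℝ) (0, 1)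
  have hu' := continuous_fderiv_apply_const hu (0, 1)
  have fst_int := integrable_mul_sq (φ := fun z ↦ exp (2 * z.2)) (by fun_prop)
    (continuous_fderiv_apply_const hu (1, 0)) (hus.fderiv_apply (𝕜 := ℝ) (1, 0))
  have snd_int : Integrable fun z ↦ fderiv ℝ (horoLift g) z (0, 1) ^ 2 :=
    (hu'.pow 2).integrable_of_hasCompactSupport (hasCompactSupport_sq hus')
  have cross_int : Integrable fun z ↦ horoLift g z * fderiv ℝ (horoLift g) z (0, 1) :=
    (hu.continuous.mul hu').integrable_of_hasCompactSupport hus.mul_right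
  have mass_int := integrable_mul_sq (continuous_const (y := 1 / 4)) hu.continuous hus
  rw [setIntegral_snd_pos_eq_integral_horoChart]
  simp only [smul_eq_mul, energy_density_horoChart hg]
  rw [integral_add ((fst_int.fun_add snd_int).fun_add cross_int) mass_int,
    integral_add (fst_int.fun_add snd_int) cross_int, integral_add fst_int snd_int,
    integral_mul_fderiv_self_eq_zero hu hus, add_zero, integral_const_mul]

theorem log_sobolev_muUpper (hg : ContDiff ℝ 1 g) (hs : HasCompactSupport g)
    (hsH : tsupport g ⊆ {p : ℝ × ℝ | 0 < p.2}) (hnorm : ∫ p, g p ^ 2 ∂muUpper = 1) {v : ℝ}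
    (hv : 0 < v) :
    ∫ p, g p ^ 2 * log (g p ^ 2) ∂muUpper ≤
      2 * v * ((∫ p in {p : ℝ × ℝ | 0 < p.2},
          fderiv ℝ g p (1, 0) ^ 2 + fderiv ℝ g p (0, 1) ^ 2) - 1 / 4)
        - log (2 * π * v) - 2 := by
  rw [← integral_sq_horoLift] at hnorm
  rw [integral_sq_mul_log_sq_muUpper hg.continuous hs hsH, dirichlet_eq_integral_horoLift hg hs hsH,
    hnorm, mul_one, add_sub_cancel_right]
  exact log_sobolev_plane (contDiff_horoLift hg) (hasCompactSupport_horoLift hs hsH) hnorm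
    (φ := fun s ↦ s) continuous_id hv

end HoroLift

section VarianceOptimization

theorem neg_log_one_sub_sub_le {z a : ℝ} (hz : 0 ≤ z) (hza : z ≤ a) (ha₀ : 0 < a) (ha₁ : a < 1) :
    -log (1 - z) - z ≤ (z / a) ^ 2 * (-log (1 - a) - a) := by
  have tail : ∀ {x : ℝ}, 0 ≤ x → x < 1 →
      HasSum (fun n : ℕ ↦ x ^ (n + 2) / (n + 2)) (-log (1 - x) - x) := fun hx₀ hx₁ ↦ by
    simpa [add_assoc, one_add_one_eq_two] using (hasSum_nat_add_iff' 1).2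
      (hasSum_pow_div_log_of_abs_lt_one (by rwa [abs_of_nonneg hx₀]))
  refine hasSum_le (fun n ↦ ?_) (tail hz (hza.trans_lt ha₁)) ((tail ha₀.le ha₁).mul_left _)
  calc z ^ (n + 2) / (n + 2) = z ^ 2 * z ^ n / (n + 2) := by ring
    _ ≤ z ^ 2 * a ^ n / (n + 2) := by gcongr
    _ = (z / a) ^ 2 * (a ^ (n + 2) / (n + 2)) := by
      rw [pow_add a]
      field_simp

theorem log_one_sub_add_mul_log_one_add_nonneg {z : ℝ} (hz : 0 ≤ z) (hz' : z ≤ 1 / 2) :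
    0 ≤ log (1 - z) + z * log (1 + z) + z := by
  have lower : -log (1 - z) - z ≤ 4 / 5 * z ^ 2 := by
    have h := neg_log_one_sub_sub_le hz hz' (by norm_num) (by norm_num)
    rw [show (1 : ℝ) - 1 / 2 = 2⁻¹ by norm_num, log_inv] at h
    nlinarith [log_two_lt_d9, sq_nonneg z]
  have upper : 4 / 5 * z ≤ log (1 + z) := by
    refine le_trans ?_ (le_log_one_add_of_nonneg hz)
    rw [le_div_iff₀ (by positivity)]
    nlinarith
  nlinarith

theorem two_mul_log_sub_half_add_nonneg {k : ℝ} (hk : 1 ≤ k) :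
    0 ≤ 2 * k * (log (k - 1 / 2) - log k) + (log (2 * k + 1) - log (2 * k)) + 1 := by
  have hk₀ : 0 < k - 1 / 2 := by linarith
  have hsub : log (1 - 1 / (2 * k)) = log (k - 1 / 2) - log k := by
    rw [← log_div (by positivity) (by positivity)]
    congr 1
    field_simp
  have hadd : log (1 + 1 / (2 * k)) = log (2 * k + 1) - log (2 * k) := by
    rw [← log_div (by positivity) (by positivity)]
    congr 1
    field_simp
  have h := log_one_sub_add_mul_log_one_add_nonneg (z := 1 / (2 * k)) (by positivity)
    (one_div_le_one_div_of_le two_pos (by linarith))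
  rw [hsub, hadd] at h
  calc 0 ≤ 2 * k * _ := mul_nonneg (by positivity) h
    _ = _ := by field_simp

/- The left side is the bound with variance `v = (k + 1) / (2 w)` at Dirichlet energy
`w - k (k - 1)`. This `v` is chosen because the bound is affine in the energy with slope `2 v`,
while `(k + 1) / w` is the slope in `w` of the right side. -/
theorem optimal_variance_bound {k w : ℝ} (hk : 1 ≤ k) (hw : 0 < w) :
    (k + 1) / w * (w - (k - 1 / 2) ^ 2) - log (2 * π * ((k + 1) / (2 * w))) - 2 ≤
      (k + 1) * (log w - log k - log (k + 1)) + (log (2 * k + 1) - log (2 * π)) := by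
  have hk₀ : 0 < k - 1 / 2 := by linarith
  have log_variance : log (2 * π * ((k + 1) / (2 * w))) =
      log (2 * π) + log (k + 1) - log 2 - log w := by
    rw [log_mul (by positivity) (by positivity), log_div (by positivity) (by positivity),
      log_mul two_ne_zero hw.ne']
    ring
  have tangent :
      k * (log (k + 1) + 2 * log (k - 1 / 2) - log k - log w) ≤
        (k + 1) / w * (k - 1 / 2) ^ 2 - k := by
    have h := log_le_sub_one_of_pos (show 0 < (k + 1) * (k - 1 / 2) ^ 2 / (k * w) by positivity)
    rw [log_div (by positivity) (by positivity), log_mul (by positivity) (by positivity),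
      log_mul (by positivity) hw.ne', log_pow, Nat.cast_ofNat, ← sub_sub] at h
    refine (mul_le_mul_of_nonneg_left h (by positivity)).trans_eq ?_
    field_simp
  have log_bound := two_mul_log_sub_half_add_nonneg hk
  rw [log_mul two_ne_zero (by positivity)] at log_bound
  rw [log_variance, mul_sub, div_mul_cancel₀ _ hw.ne']
  linarith

theorem mul_log_sobolev_constant_eq {k e : ℝ} (hk : 1 < k) (he : 0 ≤ e) :
    k * log (((k - 1) / (k + 1)) ^ (1 + 1 / k) * ((2 * k + 1) / (2 * π)) ^ (1 / k)
        * (1 + 1 / (k * (k - 1)) * e) ^ (1 + 1 / k)) =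
      (k + 1) * (log (k * (k - 1) + e) - log k - log (k + 1))
        + (log (2 * k + 1) - log (2 * π)) := by
  have hk₁ : 0 < k - 1 := sub_pos.2 hk
  have energy_eq : 1 + 1 / (k * (k - 1)) * e = (k * (k - 1) + e) / (k * (k - 1)) := by
    field_simp
  rw [energy_eq, log_mul (by positivity) (by positivity), log_mul (by positivity) (by positivity),
    log_rpow (by positivity), log_rpow (by positivity), log_rpow (by positivity),
    log_div (by positivity) (by positivity), log_div (by positivity) (by positivity),
    log_div (by positivity) (by positivity), log_mul (by positivity) hk₁.ne']
  field_simp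
  ring

end VarianceOptimization

theorem log_sobolev_from_euclidean_sobolev_general {k : ℝ} (hk : 1 < k) {g : ℝ × ℝ → ℝ}
    (hg : ContDiff ℝ 1 g) (hs : HasCompactSupport g)
    (hsH : tsupport g ⊆ {p : ℝ × ℝ | 0 < p.2}) (hnorm : ∫ p, g p ^ 2 ∂muUpper = 1) :
    ∫ p, g p ^ 2 * log (g p ^ 2) ∂muUpper ≤
      k * log (((k - 1) / (k + 1)) ^ (1 + 1 / k) * ((2 * k + 1) / (2 * π)) ^ (1 / k)
        * (1 + 1 / (k * (k - 1)) * ∫ p in {p : ℝ × ℝ | 0 < p.2},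
            fderiv ℝ g p (1, 0) ^ 2 + fderiv ℝ g p (0, 1) ^ 2) ^ (1 + 1 / k)) := by
  set e := ∫ p in {p : ℝ × ℝ | 0 < p.2}, fderiv ℝ g p (1, 0) ^ 2 + fderiv ℝ g p (0, 1) ^ 2
  have he : 0 ≤ e := integral_nonneg fun p ↦ by positivity
  set w := k * (k - 1) + e with hw_def
  have hw : 0 < w := add_pos_of_pos_of_nonneg (mul_pos (by positivity) (sub_pos.2 hk)) he
  calc ∫ p, g p ^ 2 * log (g p ^ 2) ∂muUpper
      ≤ 2 * ((k + 1) / (2 * w)) * (e - 1 / 4) - log (2 * π * ((k + 1) / (2 * w))) - 2 :=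
        log_sobolev_muUpper hg hs hsH hnorm (by positivity)
    _ = (k + 1) / w * (w - (k - 1 / 2) ^ 2) - log (2 * π * ((k + 1) / (2 * w))) - 2 := by
        rw [show w - (k - 1 / 2) ^ 2 = e - 1 / 4 by rw [hw_def]; ring]
        field_simp
    _ ≤ (k + 1) * (log w - log k - log (k + 1)) + (log (2 * k + 1) - log (2 * π)) :=
        optimal_variance_bound hk.le hw
    _ = _ := (mul_log_sobolev_constant_eq hk he).symm

/-- A one-parameter family of logarithmic Sobolev inequalities on the hyperbolic
plane obtained from Euclidean Sobolev inequalities (Theorem 4.2, inequality (3.12)):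
for an integer `n ≥ 5`, `k̃ = (n−2)/2`, and a smooth compactly supported
nonnegative `g` on the upper half-plane with `∫ g² dμ = 1`,
`∫ g² ln(g²) dμ ≤ k̃·ln[((k̃−1)/(k̃+1))^{1+1/k̃}·((2k̃+1)/(2π))^{1/k̃}`
`    ·(1 + (1/(k̃(k̃−1)))·∫ (|∂ₜg|² + |∂_y g|²) dt dy)^{1+1/k̃}]`. -/
theorem log_sobolev_from_euclidean_sobolev
    (n : ℕ) (hn : 5 ≤ n) (kt : ℝ) (hkt : kt = ((n : ℝ) - 2) / 2)
    (g : ℝ × ℝ → ℝ)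
    (hsmooth : ContDiff ℝ (⊤ : ℕ∞) g)
    (hsupp : HasCompactSupport g)
    (hsuppH : tsupport g ⊆ {p : ℝ × ℝ | 0 < p.2})
    (hnn : ∀ z, 0 ≤ g z)
    (hnorm : ∫ z, (g z) ^ 2 ∂muUpper = 1) :
    ∫ z, (g z) ^ 2 * Real.log ((g z) ^ 2) ∂muUpper
      ≤ kt * Real.log (((kt - 1) / (kt + 1)) ^ (1 + 1 / kt)
          * ((2 * kt + 1) / (2 * Real.pi)) ^ (1 / kt)
          * (1 + 1 / (kt * (kt - 1)) *
              ∫ z in {p : ℝ × ℝ | 0 < p.2},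
                (fderiv ℝ g z (1, 0)) ^ 2 + (fderiv ℝ g z (0, 1)) ^ 2)
            ^ (1 + 1 / kt)) :=
  log_sobolev_from_euclidean_sobolev_general
    (by rw [hkt]; linarith [show (5 : ℝ) ≤ n from mod_cast hn])
    (hsmooth.of_le (by exact_mod_cast le_top)) hsupp hsuppH hnorm
end
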